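/- Let φ : ℙ¹ → ℙ¹ be a rational map of degree d ≥ 2 defined over a number field K, with good reduction outside a finite set of places S of K containing all archimedean ones. If there exist three distinct K-rational points such that each point is either a tail point of φ or belongs to a critical cycle of φ, then the number of K-rational periodic points of φ satisfies |Per(φ,K)| ≤ 3·7^{4|S|} + 3. -/

import Mathlib

open NumberField IsDedekindDomain MvPolynomial
open scoped Classical nonZeroDivisors

set_option synthInstance.maxHeartbeats 1000000
set_option maxHeartbeats 1000000

noncomputable section

/-- The projective line over `K`. -/
abbrev P1 (K : Type*) [Field K] := Projectivization K (Fin 2 → K)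

variable {K : Type*} [Field K] [NumberField K]

/-- The additive `v`-adic valuation (order) of `x ∈ K`, with junk value `0` at `x = 0`,
normalized so that it is surjective onto `ℤ`. -/
def ordAt (v : HeightOneSpectrum (𝓞 K)) (x : K) : ℤ :=
  if hx : x = 0 then 0
  else - Multiplicative.toAdd (WithZero.unzero ((v.valuation K).ne_zero_iff.mpr hx))

/-- `min (v(x), v(y))` for a pair of coordinates, not both zero. -/
def minOrd (v : HeightOneSpectrum (𝓞 K)) (x y : K) : ℤ :=
  if x = 0 then ordAt v y else if y = 0 then ordAt v x else min (ordAt v x) (ordAt v y)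

/-- The `v`-adic logarithmic distance between two points of `ℙ¹(K)`:
`δ_v(P,Q) = v(x₁y₂ - x₂y₁) - min(v x₁, v y₁) - min(v x₂, v y₂)`, with value `⊤` when `P = Q`
(it is independent of the choice of homogeneous coordinates, so we compute it on the chosen
representatives). -/
def logDist (v : HeightOneSpectrum (𝓞 K)) (P Q : P1 K) : WithTop ℤ :=
  if P = Q then ⊤
  else ((ordAt v (P.rep 0 * Q.rep 1 - P.rep 1 * Q.rep 0)
        - minOrd v (P.rep 0) (P.rep 1) - minOrd v (Q.rep 0) (Q.rep 1) : ℤ) : WithTop ℤ)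

/-- An endomorphism of `ℙ¹` of degree `d` defined over `K`, given by a pair of homogeneous
forms of degree `d` with no common zero over the algebraic closure, together with the induced
self-map of `ℙ¹(K)`. -/
structure P1Map (K : Type*) [Field K] (d : ℕ) where
  toFun : P1 K → P1 K
  F : MvPolynomial (Fin 2) K
  G : MvPolynomial (Fin 2) K
  homF : F.IsHomogeneous d
  homG : G.IsHomogeneous d
  coprime : ∀ x y : AlgebraicClosure K,
    aeval ![x, y] F = 0 → aeval ![x, y] G = 0 → x = 0 ∧ y = 0
  compat : ∀ (x y : K) (hxy : ![x, y] ≠ 0)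
    (h : ![eval ![x, y] F, eval ![x, y] G] ≠ 0),
    toFun (Projectivization.mk K ![x, y] hxy) =
      Projectivization.mk K ![eval ![x, y] F, eval ![x, y] G] h

variable {d : ℕ}

/-- `φ` has good reduction at the finite place `v`: some representing pair of forms has
coefficients in the valuation ring at `v`, not all in the maximal ideal, and the reductions
of the two forms modulo `v` have no common zero in `ℙ¹` of the algebraic closure of the
residue field. -/
def GoodReductionAt (φ : P1Map K d) (v : HeightOneSpectrum (𝓞 K)) : Prop :=
  ∃ c : K, c ≠ 0 ∧
    ∃ F₀ G₀ : MvPolynomial (Fin 2) (v.valuation (K := K)).valuationSubring,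
      MvPolynomial.map ((v.valuation (K := K)).valuationSubring.subtype) F₀ = C c * φ.F ∧
      MvPolynomial.map ((v.valuation (K := K)).valuationSubring.subtype) G₀ = C c * φ.G ∧
      ((∃ m, F₀.coeff m ∉ IsLocalRing.maximalIdeal (v.valuation (K := K)).valuationSubring) ∨
        (∃ m, G₀.coeff m ∉ IsLocalRing.maximalIdeal (v.valuation (K := K)).valuationSubring)) ∧
      ∀ x y : AlgebraicClosure
          (IsLocalRing.ResidueField (v.valuation (K := K)).valuationSubring),
        eval ![x, y] (MvPolynomial.map
          ((algebraMap (IsLocalRing.ResidueField (v.valuation (K := K)).valuationSubring)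
              (AlgebraicClosure _)).comp
            (IsLocalRing.residue _)) F₀) = 0 →
        eval ![x, y] (MvPolynomial.map
          ((algebraMap (IsLocalRing.ResidueField (v.valuation (K := K)).valuationSubring)
              (AlgebraicClosure _)).comp
            (IsLocalRing.residue _)) G₀) = 0 →
        x = 0 ∧ y = 0

/-- `φ` has good reduction outside `S`, where `S` consists of all archimedean places together
with the finite places in `T`. -/
def GoodReductionOutside (φ : P1Map K d) (T : Finset (HeightOneSpectrum (𝓞 K))) : Prop :=
  ∀ v ∉ T, GoodReductionAt φ v

/-- `P` is a periodic point of `φ`. -/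
def IsPeriodicPoint (φ : P1Map K d) (P : P1 K) : Prop :=
  ∃ n, 0 < n ∧ φ.toFun^[n] P = P

/-- `P` is a preperiodic point of `φ`. -/
def IsPreperiodicPoint (φ : P1Map K d) (P : P1 K) : Prop :=
  ∃ m, IsPeriodicPoint φ (φ.toFun^[m] P)

/-- `P` is a tail point of `φ`: preperiodic but not periodic. -/
def IsTailPoint (φ : P1Map K d) (P : P1 K) : Prop :=
  IsPreperiodicPoint φ P ∧ ¬ IsPeriodicPoint φ P

/-- The set `Tail(φ,K,P)` of `K`-rational tail points of `P`: non-periodic points having `P`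
in their forward orbit. -/
def TailOf (φ : P1Map K d) (P : P1 K) : Set (P1 K) :=
  {Q | ¬ IsPeriodicPoint φ Q ∧ ∃ n, φ.toFun^[n] Q = P}

/-- `P = [a:b]` is a critical point of `φ = [F:G]`: the algebraic condition
`φ([x:y]) = φ([a:b])`, i.e. the form `G(a,b)·F(X,Y) - F(a,b)·G(X,Y)`, vanishes to order
at least `2` at `[a:b]`. -/
def IsCriticalPt (φ : P1Map K d) (P : P1 K) : Prop :=
  ∃ (a b : K) (hab : ![a, b] ≠ 0), P = Projectivization.mk K ![a, b] hab ∧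
    (C b * X 0 - C a * X 1) ^ 2 ∣
      (C (eval ![a, b] φ.G) * φ.F - C (eval ![a, b] φ.F) * φ.G)

/-- `P` belongs to a critical cycle of `φ`: it lies in the orbit of a critical periodic
point. -/
def InCriticalCycle (φ : P1Map K d) (P : P1 K) : Prop :=
  ∃ Q, IsCriticalPt φ Q ∧ IsPeriodicPoint φ Q ∧ ∃ n, φ.toFun^[n] Q = P

/-- The cardinality `|S|` of the set of places `S` consisting of all archimedean places
together with the finite places in `T`. -/
def sCard (K : Type*) [Field K] [NumberField K] (T : Finset (HeightOneSpectrum (𝓞 K))) : ℕ :=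
  T.card + Fintype.card (InfinitePlace K)

/-- `B(s) = 2^{16 s}`. -/
def Bconst (s : ℕ) : ℕ := 2 ^ (16 * s)

/-- `C(n,s) = e^{(6n)^{3n} (n s + 1 - n)}`. -/
def Cconst (n s : ℕ) : ℝ := Real.exp ((6 * n : ℝ) ^ (3 * n) * (n * s + 1 - n))

/-- `CV(d,s) = (3B(s)+13)d + 27B(s) + C(5,s) + 6C(3,s) + 32`. -/
def CVconst (d s : ℕ) : ℝ :=
  (3 * (Bconst s : ℝ) + 13) * d + 27 * (Bconst s : ℝ) + Cconst 5 s + 6 * Cconst 3 s + 32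

/-- `L₁(d,s) = (d-1)(1 + d(1 + B(s)))`. -/
def L1const (d s : ℕ) : ℕ := (d - 1) * (1 + d * (1 + Bconst s))

/-- `L₂(d,s) = max{(2(C(3,s)+2)+1)d + 1, (d-1)(1 + B(s)(B(s) + C(3,s) + 3))}`. -/
def L2const (d s : ℕ) : ℝ :=
  max ((2 * (Cconst 3 s + 2) + 1) * d + 1)
    (((d : ℝ) - 1) * (1 + (Bconst s : ℝ) * ((Bconst s : ℝ) + Cconst 3 s + 3)))

/-- `L₃(d,s) = ((1 + 3B(s))B(s) + 1)(d-1)`. -/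
def L3const (d s : ℕ) : ℕ := ((1 + 3 * Bconst s) * Bconst s + 1) * (d - 1)

/-- `L₄(d,s) = (C(3,s) + 3)(d-1)`. -/
def L4const (d s : ℕ) : ℝ := (Cconst 3 s + 3) * ((d : ℝ) - 1)

end

/-!
By good reduction, a periodic point `P` stays `v`-adically as far as possible from each special
point `Rᵢ` at every `v ∉ S`, unless `P` is the periodic point `Qᵢ` to which `Rᵢ` is mapped by some
common period: if `P` and `Rᵢ` had the same reduction, a difference quotient of the return map would
be a unit, which forces `Rᵢ = Qᵢ` and excludes critical points on the orbit of `Rᵢ`. Hence the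
cross-ratio `z` of `P` with `R₁, R₂, R₃` has `|z|_v` and `|1 - z|_v` independent of `P` for `v ∉ S`.

Such pairs `(z, 1 - z)` are counted following Evertse. Solutions of small height which have the same
nearest point among `0, 1, ∞` and lie in the same cell around it at each place of `S` coincide by
the product formula. Among the solutions of large height with the same nearest points and nearly
proportional distances to them, heights grow quickly: two such solutions are compared through Padé
approximations given by integrals of powers of a cubic polynomial. Together this gives at most
`3 * 7 ^ (4 * |S|)` periodic points other than `Q₁, Q₂, Q₃`.
-/

/-- The minor `x₀y₁ - x₁y₀` of the two rows `x`, `y`: for `Fin 2` the determinant of two points of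
the projective line, for `Fin 3` one of the minors of two vectors of the plane
`x₀ + x₁ + x₂ = 0`. -/
def minor {R : Type*} [CommRing R] {n : ℕ} (x y : Fin (n + 2) → R) : R := x 0 * y 1 - x 1 * y 0

section Minor

variable {R : Type*} [CommRing R] {n : ℕ}

theorem minor_smul_smul (u w : R) (x y : Fin (n + 2) → R) :
    minor (u • x) (w • y) = u * w * minor x y := by
  simp only [minor, Pi.smul_apply, smul_eq_mul]
  ring

@[simp]
theorem minor_self (x : Fin (n + 2) → R) : minor x x = 0 := by
  rw [minor, mul_comm, sub_self]

theorem sum_fin_three_of_ne {M : Type*} [AddCommMonoid M] (f : Fin 3 → M) {i j k : Fin 3}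
    (hij : i ≠ j) (hik : i ≠ k) (hjk : j ≠ k) : ∑ l, f l = f i + f j + f k := by
  have huniv : (Finset.univ : Finset (Fin 3)) = {i, j, k} := by
    clear f
    decide +revert
  rw [huniv, Finset.sum_insert (by simp [hij, hik]), Finset.sum_pair hjk, add_assoc]

theorem fin_three_eq_or_eq_add_one_or_eq_add_two (i j : Fin 3) : i = j ∨ i = j + 1 ∨ i = j + 2 := by
  decide +revert

theorem minor_eq_cyclic {x y : Fin 3 → R} (hx : ∑ i, x i = 0) (hy : ∑ i, y i = 0) (i : Fin 3) :
    minor x y = x i * y (i + 1) - x (i + 1) * y i := by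
  rw [Fin.sum_univ_three] at hx hy
  fin_cases i
  · rfl
  · change x 0 * y 1 - x 1 * y 0 = x 1 * y 2 - x 2 * y 1
    linear_combination y 1 * hx - x 1 * hy
  · change x 0 * y 1 - x 1 * y 0 = x 2 * y 0 - x 0 * y 2
    linear_combination x 0 * hy - y 0 * hx

end Minor

/-! ### Padé approximation by integrals of powers of a cubic -/

section PolyIntegral

variable {K : Type*} [Field K]

/-- The antiderivative of a polynomial with zero constant term. -/
noncomputable def polyPrimitive : Polynomial K →ₗ[K] Polynomial K :=
  Polynomial.lsum fun n => ((n : K) + 1)⁻¹ • Polynomial.monomial (n + 1)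

/-- The integral of a polynomial from `a` to `b`, as a linear form. -/
noncomputable def polyIntegral (a b : K) : Polynomial K →ₗ[K] K :=
  (Polynomial.leval b - Polynomial.leval a) ∘ₗ polyPrimitive

theorem polyIntegral_add_adjacent_intervals (a b c : K) (f : Polynomial K) :
    polyIntegral a b f + polyIntegral b c f = polyIntegral a c f := by
  simp [polyIntegral]

variable [CharZero K]

theorem derivative_polyPrimitive (f : Polynomial K) :
    Polynomial.derivative (polyPrimitive f) = f := by
  induction f using Polynomial.induction_on' with
  | add p q hp hq => rw [map_add, map_add, hp, hq]
  | monomial n a =>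
    have hn : (n : K) + 1 ≠ 0 := Nat.cast_add_one_ne_zero n
    simp [polyPrimitive, Polynomial.smul_monomial, mul_right_comm _ a, inv_mul_cancel₀ hn]

theorem polyIntegral_derivative (a b : K) (g : Polynomial K) :
    polyIntegral a b (Polynomial.derivative g) = g.eval b - g.eval a := by
  have h : Polynomial.derivative (polyPrimitive (Polynomial.derivative g) - g) = 0 := by
    rw [Polynomial.derivative_sub, derivative_polyPrimitive, sub_self]
  obtain ⟨c, hc⟩ := Polynomial.natDegree_eq_zero.mp (Polynomial.derivative_eq_zero.mp h)
  simp [polyIntegral, eq_add_of_sub_eq' hc.symm]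

theorem polyIntegral_eq_mul_comp (a b : K) (f : Polynomial K) :
    polyIntegral a b f =
      (b - a) * polyIntegral 0 1
        (f.comp (Polynomial.C a + Polynomial.C (b - a) * Polynomial.X)) := by
  set ℓ : Polynomial K := Polynomial.C a + Polynomial.C (b - a) * Polynomial.X with hℓ
  have hderiv : Polynomial.derivative ((polyPrimitive f).comp ℓ) = (b - a) • f.comp ℓ := by
    rw [Polynomial.derivative_comp, derivative_polyPrimitive, Polynomial.smul_eq_C_mul]
    simp [hℓ]
  rw [← smul_eq_mul, ← map_smul, ← hderiv, polyIntegral_derivative]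
  simp [hℓ, polyIntegral]

theorem polyIntegral_X_pow_mul_one_sub_X_pow (p q : ℕ) :
    ((p + q + 1).factorial : K) *
        polyIntegral 0 1 (Polynomial.X ^ p * (1 - Polynomial.X) ^ q) =
      p.factorial * q.factorial := by
  induction q generalizing p with
  | zero =>
    have h := polyIntegral_derivative (0 : K) 1 (Polynomial.X ^ (p + 1))
    rw [Polynomial.derivative_X_pow, ← Polynomial.smul_eq_C_mul, map_smul] at h
    simp only [Nat.cast_add, Nat.cast_one, add_tsub_cancel_right, smul_eq_mul, Polynomial.eval_pow,
      Polynomial.eval_X, one_pow, ne_eq, Nat.add_eq_zero_iff, one_ne_zero, and_false,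
      not_false_eq_true, zero_pow, sub_zero] at h
    simp only [add_zero, pow_zero, mul_one, Nat.factorial_succ, Nat.factorial_zero, Nat.cast_mul,
      Nat.cast_add, Nat.cast_one]
    linear_combination (p.factorial : K) * h
  | succ q ih =>
    have hparts := polyIntegral_derivative (0 : K) 1
      (Polynomial.X ^ (p + 1) * (1 - Polynomial.X) ^ (q + 1))
    have hderiv : Polynomial.derivative
        (Polynomial.X ^ (p + 1) * (1 - Polynomial.X) ^ (q + 1) : Polynomial K) =
          ((p : K) + 1) • (Polynomial.X ^ p * (1 - Polynomial.X) ^ (q + 1)) -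
          ((q : K) + 1) • (Polynomial.X ^ (p + 1) * (1 - Polynomial.X) ^ q) := by
      simp only [Polynomial.derivative_mul, Polynomial.derivative_pow, Nat.cast_add, Nat.cast_one,
        map_add, map_natCast, map_one, add_tsub_cancel_right, Polynomial.derivative_X, mul_one,
        Polynomial.derivative_sub, Polynomial.derivative_one, zero_sub, mul_neg,
        Polynomial.smul_eq_C_mul]
      ring
    rw [hderiv, map_sub, map_smul, map_smul, smul_eq_mul, smul_eq_mul] at hparts
    simp only [Polynomial.eval_mul, Polynomial.eval_pow, Polynomial.eval_X, Polynomial.eval_sub,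
      Polynomial.eval_one, sub_self, ne_eq, Nat.add_eq_zero_iff, one_ne_zero, and_false,
      not_false_eq_true, zero_pow, mul_zero, sub_zero, zero_mul] at hparts
    have ih := ih (p + 1)
    rw [Nat.factorial_succ p, show p + 1 + q + 1 = p + (q + 1) + 1 by ring] at ih
    apply mul_left_cancel₀ (Nat.cast_add_one_ne_zero p : (p : K) + 1 ≠ 0)
    rw [Nat.factorial_succ q]
    push_cast at ih ⊢
    linear_combination ((p + (q + 1) + 1).factorial : K) * hparts + ((q : K) + 1) * ih

end PolyIntegral

section RootedCubic

variable {K : Type*} [Field K]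

/-- The monic cubic with roots `a`, `b`, `c`. -/
noncomputable def rootedCubic (a b c : K) : Polynomial K :=
  (Polynomial.X - Polynomial.C a) * (Polynomial.X - Polynomial.C b) *
    (Polynomial.X - Polynomial.C c)

/-- The form `∑ₖ (N+k choose N) (2N-k choose N) s^(N-k) t^k`, a rescaled hypergeometric
polynomial: up to an explicit factor it is the integral of the `N`-th power of a cubic between two
of its roots. -/
def padeForm {R : Type*} [CommRing R] (N : ℕ) (s t : R) : R :=
  ∑ k ∈ Finset.range (N + 1),
    (((N + k).choose N * (2 * N - k).choose N : ℕ) : R) * (s ^ (N - k) * t ^ k)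

theorem factorial_pow_three_mul_choose_mul_choose {N k : ℕ} (hk : k ≤ N) :
    N.factorial ^ 3 * ((N + k).choose N * (2 * N - k).choose N) =
      N.choose k * ((N + k).factorial * (2 * N - k).factorial) := by
  have h₁ := Nat.choose_mul_factorial_mul_factorial (Nat.le_add_right N k)
  have h₂ := Nat.choose_mul_factorial_mul_factorial (show N ≤ 2 * N - k by omega)
  have h₃ := Nat.choose_mul_factorial_mul_factorial hk
  rw [Nat.add_sub_cancel_left] at h₁
  rw [show 2 * N - k - N = N - k by omega] at h₂
  calc N.factorial ^ 3 * ((N + k).choose N * (2 * N - k).choose N)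
      = N.factorial ^ 2 * (N.choose k * k.factorial * (N - k).factorial) *
          ((N + k).choose N * (2 * N - k).choose N) := by rw [h₃]; ring
    _ = N.choose k * (((N + k).choose N * N.factorial * k.factorial) *
          ((2 * N - k).choose N * N.factorial * (N - k).factorial)) := by ring
    _ = _ := by rw [h₁, h₂]

theorem rootedCubic_pow_comp_affine (a b c : K) (N : ℕ) :
    (rootedCubic a b c ^ N).comp (Polynomial.C a + Polynomial.C (b - a) * Polynomial.X) =
      ∑ k ∈ Finset.range (N + 1),
        ((-1) ^ N * (b - a) ^ (2 * N) * N.choose k * ((a - c) ^ (N - k) * (b - c) ^ k)) •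
          (Polynomial.X ^ (N + k) * (1 - Polynomial.X) ^ (2 * N - k)) := by
  have hbase : (rootedCubic a b c).comp (Polynomial.C a + Polynomial.C (b - a) * Polynomial.X) =
      Polynomial.C (-1 * (b - a) ^ 2) * (Polynomial.X * (1 - Polynomial.X)) *
        (Polynomial.C (b - c) * Polynomial.X + Polynomial.C (a - c) * (1 - Polynomial.X)) := by
    simp only [rootedCubic, Polynomial.mul_comp, Polynomial.sub_comp, Polynomial.X_comp,
      Polynomial.C_comp, Polynomial.C_sub, Polynomial.C_mul, Polynomial.C_pow, Polynomial.C_neg,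
      Polynomial.C_1]
    ring
  rw [Polynomial.pow_comp, hbase, mul_pow, add_pow, Finset.mul_sum]
  refine Finset.sum_congr rfl fun k hk => ?_
  obtain ⟨m, rfl⟩ := Nat.exists_eq_add_of_le (Finset.mem_range_succ_iff.mp hk)
  rw [show 2 * (k + m) - k = k + 2 * m by omega, Nat.add_sub_cancel_left,
    Polynomial.smul_eq_C_mul]
  simp only [Polynomial.C_mul, Polynomial.C_pow, Polynomial.C_neg, Polynomial.C_1, mul_pow,
    Polynomial.C_eq_natCast]
  ring

variable [CharZero K]

theorem factorial_mul_polyIntegral_rootedCubic_pow (a b c : K) (N : ℕ) :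
    ((3 * N + 1).factorial : K) * polyIntegral a b (rootedCubic a b c ^ N) =
      (-1) ^ N * (N.factorial : K) ^ 3 *
        ((b - a) ^ (2 * N + 1) * padeForm N (a - c) (b - c)) := by
  rw [polyIntegral_eq_mul_comp, rootedCubic_pow_comp_affine, map_sum, padeForm]
  simp only [Finset.mul_sum, map_smul, smul_eq_mul]
  refine Finset.sum_congr rfl fun k hk => ?_
  have hk : k ≤ N := Finset.mem_range_succ_iff.mp hk
  have hbeta := polyIntegral_X_pow_mul_one_sub_X_pow (K := K) (N + k) (2 * N - k)
  rw [show N + k + (2 * N - k) + 1 = 3 * N + 1 by omega] at hbeta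
  have hbinom := congrArg (Nat.cast : ℕ → K) (factorial_pow_three_mul_choose_mul_choose hk)
  push_cast at hbinom ⊢
  linear_combination (-1) ^ N * (b - a) ^ (2 * N + 1) * ((a - c) ^ (N - k) * (b - c) ^ k) *
    (N.choose k * hbeta - hbinom)

theorem exists_depressedCubic_sq_eq (p q : K) (n : ℕ) : ∃ (A : Polynomial K) (α : K),
    letI f : Polynomial K := Polynomial.X ^ 3 + Polynomial.C p * Polynomial.X + Polynomial.C q
    f ^ 2 - Polynomial.C α * f -
        Polynomial.C (-(n * (n + 1) / (3 * ((3 * n + 4) * (3 * n + 2)))) *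
          (4 * p ^ 3 + 27 * q ^ 2)) =
      Polynomial.C (n : K) * Polynomial.derivative f * A + f * Polynomial.derivative A := by
  have h₄ : 3 * (n : K) + 4 ≠ 0 := by exact_mod_cast (by omega : 3 * n + 4 ≠ 0)
  have h₂ : 3 * (n : K) + 2 ≠ 0 := by exact_mod_cast (by omega : 3 * n + 2 ≠ 0)
  refine ⟨Polynomial.C (1 / (3 * (n : K) + 4)) * Polynomial.X ^ 4 +
    Polynomial.C ((5 * n + 4) / ((3 * n + 4) * (3 * n + 2)) * p) * Polynomial.X ^ 2 +
    Polynomial.C (-1 / ((3 * n + 4) * (3 * n + 2)) * q) * Polynomial.X +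
    Polynomial.C (4 * (n + 1) / (3 * ((3 * n + 4) * (3 * n + 2))) * p ^ 2),
    (2 - (9 * n + 7) / ((3 * n + 4) * (3 * n + 2))) * q, ?_⟩
  refine Polynomial.funext fun t => ?_
  simp only [Polynomial.derivative_add, Polynomial.derivative_C_mul, Polynomial.derivative_X_pow,
    Polynomial.derivative_C, Polynomial.derivative_X, Polynomial.eval_add, Polynomial.eval_sub,
    Polynomial.eval_mul, Polynomial.eval_pow, Polynomial.eval_C, Polynomial.eval_X,
    Polynomial.eval_zero, Polynomial.eval_one]
  push_cast
  obtain ⟨u, hu⟩ : ∃ u : K, u = 3 * n + 2 := ⟨_, rfl⟩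
  have hn : (n : K) = (u - 2) / 3 := by rw [hu]; ring
  have h₄' : 3 * (n : K) + 4 = u + 2 := by rw [hu]; ring
  rw [h₄'] at h₄
  rw [← hu] at h₂
  rw [← hu, h₄', hn]
  field_simp
  ring

theorem exists_rootedCubic_sq_eq (a b c : K) (n : ℕ) : ∃ (A : Polynomial K) (α : K),
    rootedCubic a b c ^ 2 - Polynomial.C α * rootedCubic a b c -
        Polynomial.C (n * (n + 1) / (3 * ((3 * n + 4) * (3 * n + 2))) *
          ((b - a) * (c - b) * (a - c)) ^ 2) =
      Polynomial.C (n : K) * Polynomial.derivative (rootedCubic a b c) * A +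
        rootedCubic a b c * Polynomial.derivative A := by
  set m : K := (a + b + c) / 3 with hm
  set p : K := (a - m) * (b - m) + (b - m) * (c - m) + (c - m) * (a - m) with hp
  set q : K := -((a - m) * (b - m) * (c - m)) with hq
  obtain ⟨A, α, h⟩ := exists_depressedCubic_sq_eq p q n
  have hcubic : (Polynomial.X ^ 3 + Polynomial.C p * Polynomial.X + Polynomial.C q).comp
      (Polynomial.X - Polynomial.C m) = rootedCubic a b c := by
    refine Polynomial.funext fun t => ?_
    simp only [rootedCubic, Polynomial.eval_comp, Polynomial.eval_add, Polynomial.eval_pow,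
      Polynomial.eval_X, Polynomial.eval_mul, Polynomial.eval_C, Polynomial.eval_sub, hp, hq, hm]
    field_simp
    ring
  have hdisc : -(4 * p ^ 3 + 27 * q ^ 2) = ((b - a) * (c - b) * (a - c)) ^ 2 := by
    rw [hp, hq, hm]
    field_simp
    ring
  have hderiv (g : Polynomial K) :
      (Polynomial.derivative g).comp (Polynomial.X - Polynomial.C m) =
        Polynomial.derivative (g.comp (Polynomial.X - Polynomial.C m)) := by
    simp [Polynomial.derivative_comp]
  have hshift := congrArg (Polynomial.comp · (Polynomial.X - Polynomial.C m)) h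
  simp only [Polynomial.sub_comp, Polynomial.add_comp, Polynomial.mul_comp, Polynomial.pow_comp,
    Polynomial.C_comp, hderiv] at hshift
  refine ⟨A.comp (Polynomial.X - Polynomial.C m), α, ?_⟩
  rw [← hdisc, ← hcubic, ← neg_mul_comm]
  simpa only [Polynomial.sub_comp, Polynomial.add_comp, Polynomial.mul_comp, Polynomial.pow_comp,
    Polynomial.C_comp] using hshift

theorem exists_polyIntegral_rootedCubic_recurrence (a b c : K) (n : ℕ) : ∃ α : K, ∀ x y,
    (rootedCubic a b c).eval x = 0 → (rootedCubic a b c).eval y = 0 →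
    polyIntegral x y (rootedCubic a b c ^ (n + 2)) =
      α * polyIntegral x y (rootedCubic a b c ^ (n + 1)) +
      (n + 1) * (n + 2) / (3 * ((3 * n + 7) * (3 * n + 5))) *
        ((b - a) * (c - b) * (a - c)) ^ 2 * polyIntegral x y (rootedCubic a b c ^ n) := by
  obtain ⟨A, α, h⟩ := exists_rootedCubic_sq_eq a b c (n + 1)
  refine ⟨α, fun x y hx hy => ?_⟩
  set f := rootedCubic a b c
  set β : K := (n + 1) * (n + 2) / (3 * ((3 * n + 7) * (3 * n + 5))) *
    ((b - a) * (c - b) * (a - c)) ^ 2 with hβ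
  replace h : f ^ 2 - Polynomial.C α * f - Polynomial.C β =
      Polynomial.C ((n : K) + 1) * Polynomial.derivative f * A + f * Polynomial.derivative A := by
    rw [hβ, ← Nat.cast_succ, ← h]
    push_cast
    ring_nf
  have hderiv : Polynomial.derivative (f ^ (n + 1) * A) =
      f ^ (n + 2) - α • f ^ (n + 1) - β • f ^ n := by
    rw [Polynomial.smul_eq_C_mul, Polynomial.smul_eq_C_mul, Polynomial.derivative_mul,
      Polynomial.derivative_pow]
    push_cast
    linear_combination -f ^ n * h
  have hint := polyIntegral_derivative x y (f ^ (n + 1) * A)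
  rw [hderiv] at hint
  simp only [map_sub, map_smul, smul_eq_mul, Polynomial.eval_mul, Polynomial.eval_pow, hx, hy,
    zero_pow n.succ_ne_zero, zero_mul, sub_self] at hint
  linear_combination hint

end RootedCubic

section PadeTriple

variable {K : Type*} [Field K]

/-- The vector `(z, 1 - z, -1)`: the solution `z + (1 - z) = 1` of the unit equation, written
symmetrically as three numbers with sum `0`. -/
def unitTriple (z : K) : Fin 3 → K := ![z, 1 - z, -1]

theorem sum_unitTriple (z : K) : ∑ i, unitTriple z i = 0 := by
  simp [unitTriple, Fin.sum_univ_three]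

/-- Padé approximations of degree `N` to `unitTriple z`: three numbers with sum `0`, the `i`-th of
which is divisible by a high power of the `i`-th entry of `unitTriple z`. -/
def padeTriple (N : ℕ) (z : K) (i : Fin 3) : K :=
  unitTriple z i ^ (2 * N + 1) * padeForm N (unitTriple z (i + 2)) (-unitTriple z (i + 1))

theorem minor_unitTriple (z w : K) : minor (unitTriple z) (unitTriple w) = z - w := by
  simp only [minor, unitTriple, Matrix.cons_val_zero, Matrix.cons_val_one]
  ring

theorem padeTriple_zero (z : K) : padeTriple 0 z = unitTriple z := by
  ext i
  simp [padeTriple, padeForm]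

/-- The integrals of the `N`-th power of the cubic with roots `0`, `z`, `1` over the three sides of
the triangle formed by the roots. -/
noncomputable def cubicIntegral (N : ℕ) (z : K) (i : Fin 3) : K :=
  polyIntegral ((![0, z, 1] : Fin 3 → K) i) ((![0, z, 1] : Fin 3 → K) (i + 1))
    (rootedCubic 0 z 1 ^ N)

theorem sum_cubicIntegral (N : ℕ) (z : K) : ∑ i, cubicIntegral N z i = 0 := by
  rw [Fin.sum_univ_three]
  change polyIntegral 0 z _ + polyIntegral z 1 _ + polyIntegral 1 0 _ = 0
  rw [polyIntegral_add_adjacent_intervals, polyIntegral_add_adjacent_intervals]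
  simp [polyIntegral]

variable [CharZero K]

theorem factorial_mul_cubicIntegral (N : ℕ) (z : K) (i : Fin 3) :
    ((3 * N + 1).factorial : K) * cubicIntegral N z i =
      (-1) ^ N * (N.factorial : K) ^ 3 * padeTriple N z i := by
  have hrot₁ : rootedCubic 0 z 1 = rootedCubic z 1 0 := by unfold rootedCubic; ring
  have hrot₂ : rootedCubic 0 z 1 = rootedCubic 1 0 z := by unfold rootedCubic; ring
  fin_cases i
  · simpa [cubicIntegral, padeTriple, unitTriple] using
      factorial_mul_polyIntegral_rootedCubic_pow 0 z 1 N
  · simpa [cubicIntegral, padeTriple, unitTriple, hrot₁] using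
      factorial_mul_polyIntegral_rootedCubic_pow z 1 0 N
  · simpa [cubicIntegral, padeTriple, unitTriple, hrot₂] using
      factorial_mul_polyIntegral_rootedCubic_pow 1 0 z N

theorem exists_padeTriple_eq_smul (N : ℕ) (z : K) :
    ∃ c : K, c ≠ 0 ∧ padeTriple N z = c • cubicIntegral N z := by
  have hfact (m : ℕ) : (m.factorial : K) ≠ 0 := Nat.cast_ne_zero.mpr m.factorial_ne_zero
  have hc : (-1) ^ N * (N.factorial : K) ^ 3 ≠ 0 :=
    mul_ne_zero (pow_ne_zero _ (neg_ne_zero.mpr one_ne_zero)) (pow_ne_zero _ (hfact N))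
  refine ⟨((-1) ^ N * (N.factorial : K) ^ 3)⁻¹ * (3 * N + 1).factorial,
    mul_ne_zero (inv_ne_zero hc) (hfact _), funext fun i => ?_⟩
  rw [Pi.smul_apply, smul_eq_mul, mul_assoc, factorial_mul_cubicIntegral, inv_mul_cancel_left₀ hc]

theorem sum_padeTriple (N : ℕ) (z : K) : ∑ i, padeTriple N z i = 0 := by
  obtain ⟨c, -, hc⟩ := exists_padeTriple_eq_smul N z
  simp_rw [hc, Pi.smul_apply, ← Finset.smul_sum, sum_cubicIntegral, smul_zero]

theorem minor_padeTriple_eq_zero_iff (M N : ℕ) (z : K) :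
    minor (padeTriple M z) (padeTriple N z) = 0 ↔
      minor (cubicIntegral M z) (cubicIntegral N z) = 0 := by
  obtain ⟨a, ha, hM⟩ := exists_padeTriple_eq_smul M z
  obtain ⟨b, hb, hN⟩ := exists_padeTriple_eq_smul N z
  rw [hM, hN, minor_smul_smul, mul_eq_zero, or_iff_right (mul_ne_zero ha hb)]

theorem minor_padeTriple_succ_ne_zero {z : K} (h₀ : z ≠ 0) (h₁ : z ≠ 1) (hcyc : z ^ 2 - z + 1 ≠ 0)
    (n : ℕ) : minor (padeTriple (n + 1) z) (padeTriple n z) ≠ 0 := by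
  have h₁' : 1 - z ≠ 0 := sub_ne_zero.mpr h₁.symm
  induction n with
  | zero =>
    have hval : minor (padeTriple (0 + 1) z) (padeTriple 0 z) =
        -2 * (z * (1 - z) * (z ^ 2 - z + 1)) := by
      have hone (s t : K) : padeForm (0 + 1) s t = 2 * s + 2 * t := by
        norm_num [padeForm, Finset.sum_range_succ]
      rw [padeTriple_zero]
      simp only [minor, padeTriple, hone, unitTriple, zero_add, mul_one, Nat.reduceAdd,
        Fin.reduceAdd, Fin.isValue, Matrix.cons_val, Matrix.cons_val_zero, Matrix.cons_val_one]
      ring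
    rw [hval]
    exact mul_ne_zero (by norm_num) (mul_ne_zero (mul_ne_zero h₀ h₁') hcyc)
  | succ n ih =>
    rw [Ne, minor_padeTriple_eq_zero_iff] at ih ⊢
    obtain ⟨α, hrec⟩ := exists_polyIntegral_rootedCubic_recurrence 0 z 1 n
    have hroot (j : Fin 3) :
        (rootedCubic 0 z 1).eval ((![0, z, 1] : Fin 3 → K) j) = 0 := by
      fin_cases j <;> simp [rootedCubic]
    have hβ : ((n : K) + 1) * (n + 2) / (3 * ((3 * n + 7) * (3 * n + 5))) *
        ((z - 0) * (1 - z) * (0 - 1)) ^ 2 ≠ 0 := by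
      refine mul_ne_zero (div_ne_zero ?_ ?_) (pow_ne_zero 2 (by simpa using ⟨h₀, h₁'⟩))
      · exact_mod_cast (by positivity : (n + 1) * (n + 2) ≠ 0)
      · exact_mod_cast (by positivity : 3 * ((3 * n + 7) * (3 * n + 5)) ≠ 0)
    have hrec' (i : Fin 3) := hrec _ _ (hroot i) (hroot (i + 1))
    intro hminor
    refine mul_ne_zero hβ ih ?_
    simp only [minor, cubicIntegral] at hminor ⊢
    rw [hrec' 0, hrec' 1] at hminor
    linear_combination -hminor

/-- The linear form on pairs whose smallness measures how well `padeTriple N z` approximates the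
direction of `unitTriple w`. -/
def padePairing (N : ℕ) (w z : K) : K := minor (unitTriple w) (padeTriple N z)

theorem padePairing_eq_cyclic (N : ℕ) (w z : K) (i : Fin 3) :
    padePairing N w z =
      unitTriple w i * padeTriple N z (i + 1) - unitTriple w (i + 1) * padeTriple N z i :=
  minor_eq_cyclic (sum_unitTriple w) (sum_padeTriple N z) i

omit [CharZero K] in
theorem padePairing_zero (w z : K) : padePairing 0 w z = w - z := by
  rw [padePairing, padeTriple_zero, minor_unitTriple]

theorem eq_of_padePairing_eq_zero {z w w' : K} (h₀ : z ≠ 0) (h₁ : z ≠ 1)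
    (hcyc : z ^ 2 - z + 1 ≠ 0) {N : ℕ} (hw : padePairing N w z = 0) (hw' : padePairing N w' z = 0) :
    w = w' := by
  by_contra hne
  apply minor_padeTriple_succ_ne_zero h₀ h₁ hcyc N
  simp only [padePairing, minor, unitTriple, Matrix.cons_val_zero, Matrix.cons_val_one] at hw hw' ⊢
  have hsum : padeTriple N z 0 + padeTriple N z 1 = 0 := by
    apply (mul_eq_zero.mp _).resolve_left (sub_ne_zero.mpr hne)
    linear_combination hw - hw'
  have hzero : padeTriple N z 0 = 0 := by linear_combination w * hsum - hw
  have hone : padeTriple N z 1 = 0 := by linear_combination hsum - hzero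
  rw [hzero, hone, mul_zero, mul_zero, sub_zero]

theorem padePairing_succ_ne_zero {z w : K} (h₀ : z ≠ 0) (h₁ : z ≠ 1) (hcyc : z ^ 2 - z + 1 ≠ 0)
    {N : ℕ} (hw : padePairing N w z = 0) : padePairing (N + 1) w z ≠ 0 := by
  intro hw'
  apply minor_padeTriple_succ_ne_zero h₀ h₁ hcyc N
  simp only [padePairing, minor, unitTriple, Matrix.cons_val_zero, Matrix.cons_val_one] at hw hw' ⊢
  linear_combination (padeTriple (N + 1) z 0 + padeTriple (N + 1) z 1) * hw -
    (padeTriple N z 0 + padeTriple N z 1) * hw'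

end PadeTriple

theorem choose_mul_choose_le_eight_pow {N k : ℕ} (hk : k ≤ N) :
    (N + k).choose N * (2 * N - k).choose N ≤ 8 ^ N :=
  calc
    _ ≤ 2 ^ (N + k) * 2 ^ (2 * N - k) :=
      Nat.mul_le_mul (Nat.choose_le_two_pow _ _) (Nat.choose_le_two_pow _ _)
    _ = 8 ^ N := by
      rw [← pow_add, show N + k + (2 * N - k) = 3 * N by lia, pow_mul]
      norm_num

/-! ### Heights of solutions of the unit equation -/

/-- A finite set of absolute values of a field `K`, raised to multiplicities, that satisfies the
product inequality on a ring of integers: the setting in which the unit equation is solved. For a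
number field these are the archimedean places together with a finite set of primes, normalised so
that an archimedean `v` has multiplicity its local degree, and `integers` is the ring of
`S`-integers. -/
structure PlaceSystem (K : Type*) [Field K] (ι : Type*) [Fintype ι] where
  abv : ι → AbsoluteValue K ℝ
  weight : ι → ℕ
  S : Finset ι
  arch : Finset ι
  integers : Subring K
  arch_subset : arch ⊆ S
  arch_nonempty : arch.Nonempty
  weight_of_mem : ∀ v ∈ arch, weight v = 1 ∨ weight v = 2
  weight_of_notMem : ∀ v ∉ arch, weight v = 1
  exists_embedding : ∀ v ∈ arch, ∃ σ : K →+* ℂ, ∀ x, abv v x = ‖σ x‖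
  add_le_max : ∀ v ∉ arch, ∀ x y, abv v (x + y) ≤ max (abv v x) (abv v y)
  le_half_of_lt_one : ∀ v ∉ arch, ∀ x, abv v x < 1 → abv v x ≤ 1 / 2
  one_le_prod : ∀ x ∈ integers, x ≠ 0 → 1 ≤ ∏ v, abv v x ^ weight v

namespace PlaceSystem

variable {K : Type*} [Field K] {ι : Type*} [Fintype ι] (P : PlaceSystem K ι)

/-- The constant in the triangle inequality `|x + y| ≤ c max(|x|, |y|)` at a place. -/
noncomputable def addConst (v : ι) : ℝ := if v ∈ P.arch then 2 else 1

theorem one_le_addConst (v : ι) : 1 ≤ P.addConst v := by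
  unfold addConst
  split_ifs <;> norm_num

theorem addConst_pos (v : ι) : 0 < P.addConst v := one_pos.trans_le (P.one_le_addConst v)

theorem abv_add_le (v : ι) (x y : K) :
    P.abv v (x + y) ≤ P.addConst v * max (P.abv v x) (P.abv v y) := by
  unfold addConst
  split_ifs with hv
  · linarith [(P.abv v).add_le x y, le_max_left (P.abv v x) (P.abv v y),
      le_max_right (P.abv v x) (P.abv v y)]
  · rw [one_mul]
    exact P.add_le_max v hv x y

theorem abv_sub_le (v : ι) (x y : K) :
    P.abv v (x - y) ≤ P.addConst v * max (P.abv v x) (P.abv v y) := by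
  simpa only [sub_eq_add_neg, (P.abv v).map_neg] using P.abv_add_le v x (-y)

theorem abv_natCast_le (v : ι) (n : ℕ) : P.abv v n ≤ n := by
  induction n with
  | zero => simp
  | succ n ih =>
    push_cast
    grw [(P.abv v).add_le, (P.abv v).map_one, ih]

variable {P}

theorem abv_natCast_le_one {v : ι} (hv : v ∉ P.arch) (n : ℕ) : P.abv v n ≤ 1 := by
  induction n with
  | zero => simp
  | succ n ih =>
    push_cast
    exact (P.add_le_max v hv _ _).trans (max_le ih (P.abv v).map_one.le)

theorem abv_sum_le {v : ι} (hv : v ∉ P.arch) {κ : Type*} {s : Finset κ} {f : κ → K} {c : ℝ}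
    (hc : 0 ≤ c) (h : ∀ i ∈ s, P.abv v (f i) ≤ c) : P.abv v (∑ i ∈ s, f i) ≤ c :=
  Finset.sum_induction f (P.abv v · ≤ c)
    (fun x y hx hy => (P.add_le_max v hv x y).trans (max_le hx hy)) (by simpa using hc) h

theorem abv_padeForm_le {v : ι} {s t : K} {m : ℝ} (N : ℕ) (hs : P.abv v s ≤ m)
    (ht : P.abv v t ≤ m) : P.abv v (padeForm N s t) ≤ P.addConst v ^ (4 * N) * m ^ N := by
  have hm : 0 ≤ m := ((P.abv v).nonneg s).trans hs
  have hmonomial {k : ℕ} (hk : k ∈ Finset.range (N + 1)) :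
      P.abv v (s ^ (N - k) * t ^ k) ≤ m ^ N := by
    rw [map_mul, map_pow, map_pow]
    calc
      _ ≤ m ^ (N - k) * m ^ k := by gcongr
      _ = m ^ N := by rw [← pow_add, Nat.sub_add_cancel (Finset.mem_range_succ_iff.mp hk)]
  unfold padeForm
  by_cases hv : v ∈ P.arch
  · calc
      _ ≤ ∑ _k ∈ Finset.range (N + 1), (8 : ℝ) ^ N * m ^ N := by
        refine ((P.abv v).sum_le _ _).trans (Finset.sum_le_sum fun _ hk => ?_)
        rw [map_mul]
        refine mul_le_mul ((P.abv_natCast_le v _).trans ?_) (hmonomial hk) ((P.abv v).nonneg _)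
          (by positivity)
        exact_mod_cast choose_mul_choose_le_eight_pow (Finset.mem_range_succ_iff.mp hk)
      _ = ((N + 1 : ℕ) : ℝ) * 8 ^ N * m ^ N := by
        rw [Finset.sum_const, Finset.card_range, nsmul_eq_mul, mul_assoc]
      _ ≤ 2 ^ N * 8 ^ N * m ^ N := by
        gcongr
        exact_mod_cast Nat.lt_two_pow_self
      _ = _ := by
        rw [addConst, if_pos hv, ← mul_pow, pow_mul]
        norm_num
  · rw [addConst, if_neg hv, one_pow, one_mul]
    refine abv_sum_le hv (by positivity) fun _ hk => ?_
    rw [map_mul]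
    exact (mul_le_of_le_one_left ((P.abv v).nonneg _) (abv_natCast_le_one hv _)).trans
      (hmonomial hk)

variable (P)

/-- The solutions `z + (1 - z) = 1` of the unit equation in the ring of integers of `P`. -/
structure IsUnitSol (z : K) : Prop where
  ne_zero : z ≠ 0
  ne_one : z ≠ 1
  mem : z ∈ P.integers
  inv_mem : z⁻¹ ∈ P.integers
  one_sub_inv_mem : (1 - z)⁻¹ ∈ P.integers

/-- The contribution of a place to the logarithm of the product of all absolute values. -/
noncomputable def logAbv (v : ι) (x : K) : ℝ := P.weight v * Real.log (P.abv v x)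

theorem sum_logAbv {x : K} (hx : x ≠ 0) :
    ∑ v, P.logAbv v x = Real.log (∏ v, P.abv v x ^ P.weight v) := by
  rw [Real.log_prod fun v _ => pow_ne_zero _ ((P.abv v).ne_zero hx)]
  simp only [Real.log_pow, logAbv]

variable {P} in
theorem sum_logAbv_nonneg {x : K} (hx : x ∈ P.integers) (h₀ : x ≠ 0) : 0 ≤ ∑ v, P.logAbv v x := by
  rw [P.sum_logAbv h₀]
  exact Real.log_nonneg (P.one_le_prod x hx h₀)

variable {P} in
theorem logAbv_le_logAbv {v : ι} {x y : K} (hx : x ≠ 0) (h : P.abv v x ≤ P.abv v y) :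
    P.logAbv v x ≤ P.logAbv v y :=
  mul_le_mul_of_nonneg_left (Real.log_le_log ((P.abv v).pos hx) h) (Nat.cast_nonneg _)

/-- An index at which the entries of `unitTriple z` have least absolute value. -/
noncomputable def minIdx (v : ι) (z : K) : Fin 3 :=
  (Finite.exists_min fun i => P.abv v (unitTriple z i)).choose

/-- An index at which the entries of `unitTriple z` have greatest absolute value. -/
noncomputable def maxIdx (v : ι) (z : K) : Fin 3 :=
  (Finite.exists_max fun i => P.abv v (unitTriple z i)).choose

/-- The least absolute value of the entries of `unitTriple z`. -/
noncomputable def minAbv (v : ι) (z : K) : ℝ := P.abv v (unitTriple z (P.minIdx v z))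

/-- The greatest absolute value of the entries of `unitTriple z`. -/
noncomputable def maxAbv (v : ι) (z : K) : ℝ := P.abv v (unitTriple z (P.maxIdx v z))

/-- The weighted logarithm of `minAbv`. -/
noncomputable def logMin (v : ι) (z : K) : ℝ := P.weight v * Real.log (P.minAbv v z)

/-- The weighted logarithm of `maxAbv`; its sum over the places is the height. -/
noncomputable def logMax (v : ι) (z : K) : ℝ := P.weight v * Real.log (P.maxAbv v z)

/-- How close `z` is at `v` to one of `0`, `1`, `∞`, on a logarithmic scale. -/
noncomputable def spread (v : ι) (z : K) : ℝ := P.logMax v z - P.logMin v z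

/-- The weighted logarithm of `addConst`. -/
noncomputable def logAddConst (v : ι) : ℝ := P.weight v * Real.log (P.addConst v)

/-- The logarithmic height of the projective point `[z : 1 - z : -1]`. -/
noncomputable def height (z : K) : ℝ := ∑ v, P.logMax v z

/-- The sum of the errors `logAddConst` in the triangle inequalities at all places. -/
noncomputable def archLog : ℝ := ∑ v, P.logAddConst v

theorem minAbv_le (v : ι) (z : K) (i : Fin 3) : P.minAbv v z ≤ P.abv v (unitTriple z i) :=
  (Finite.exists_min fun i => P.abv v (unitTriple z i)).choose_spec i

theorem le_maxAbv (v : ι) (z : K) (i : Fin 3) : P.abv v (unitTriple z i) ≤ P.maxAbv v z :=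
  (Finite.exists_max fun i => P.abv v (unitTriple z i)).choose_spec i

theorem abv_unitTriple_le_of_minIdx (v : ι) (z : K) {i j k : Fin 3}
    (hsum : unitTriple z i + unitTriple z j + unitTriple z k = 0) (hi : P.minIdx v z = i) :
    P.abv v (unitTriple z j) ≤ P.addConst v * P.abv v (unitTriple z k) := by
  have hj : unitTriple z j = -(unitTriple z i + unitTriple z k) := by linear_combination hsum
  rw [hj, (P.abv v).map_neg]
  refine (P.abv_add_le v _ _).trans_eq ?_
  rw [max_eq_right (hi ▸ P.minAbv_le v z k)]

theorem maxAbv_le_of_ne_minIdx (v : ι) (z : K) {j : Fin 3} (hj : j ≠ P.minIdx v z) :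
    P.maxAbv v z ≤ P.addConst v * P.abv v (unitTriple z j) := by
  have hself (k : Fin 3) (h : P.abv v (unitTriple z k) ≤ P.abv v (unitTriple z j)) :
      P.abv v (unitTriple z k) ≤ P.addConst v * P.abv v (unitTriple z j) :=
    h.trans (le_mul_of_one_le_left ((P.abv v).nonneg _) (P.one_le_addConst v))
  unfold maxAbv
  generalize P.maxIdx v z = k
  by_cases hk : k = P.minIdx v z
  · exact hself k (hk ▸ P.minAbv_le v z j)
  by_cases hkj : k = j
  · exact hself k (hkj ▸ le_rfl)
  refine P.abv_unitTriple_le_of_minIdx v z ?_ rfl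
  rw [← sum_unitTriple z, sum_fin_three_of_ne _ (Ne.symm hk) hj.symm hkj]

variable {P} {z w : K}

namespace IsUnitSol

theorem unitTriple_ne_zero (hz : P.IsUnitSol z) (i : Fin 3) : unitTriple z i ≠ 0 := by
  fin_cases i
  · exact hz.ne_zero
  · exact sub_ne_zero.mpr hz.ne_one.symm
  · exact neg_ne_zero.mpr one_ne_zero

theorem unitTriple_mem (hz : P.IsUnitSol z) (i : Fin 3) : unitTriple z i ∈ P.integers := by
  fin_cases i
  · exact hz.mem
  · exact sub_mem (one_mem _) hz.mem
  · exact neg_mem (one_mem _)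

theorem unitTriple_inv_mem (hz : P.IsUnitSol z) (i : Fin 3) :
    (unitTriple z i)⁻¹ ∈ P.integers := by
  fin_cases i
  · exact hz.inv_mem
  · exact hz.one_sub_inv_mem
  · simp [unitTriple]

theorem sum_logAbv_unitTriple (hz : P.IsUnitSol z) (i : Fin 3) :
    ∑ v, P.logAbv v (unitTriple z i) = 0 := by
  refine le_antisymm ?_ (sum_logAbv_nonneg (hz.unitTriple_mem i) (hz.unitTriple_ne_zero i))
  have h := sum_logAbv_nonneg (hz.unitTriple_inv_mem i) (inv_ne_zero (hz.unitTriple_ne_zero i))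
  simpa [logAbv, map_inv₀] using h

theorem minAbv_pos (hz : P.IsUnitSol z) (v : ι) : 0 < P.minAbv v z :=
  (P.abv v).pos (hz.unitTriple_ne_zero _)

theorem maxAbv_pos (hz : P.IsUnitSol z) (v : ι) : 0 < P.maxAbv v z :=
  (P.abv v).pos (hz.unitTriple_ne_zero _)

theorem logMin_le (hz : P.IsUnitSol z) (v : ι) (i : Fin 3) :
    P.logMin v z ≤ P.logAbv v (unitTriple z i) :=
  logAbv_le_logAbv (hz.unitTriple_ne_zero _) (P.minAbv_le v z i)

theorem le_logMax (hz : P.IsUnitSol z) (v : ι) (i : Fin 3) :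
    P.logAbv v (unitTriple z i) ≤ P.logMax v z :=
  logAbv_le_logAbv (hz.unitTriple_ne_zero i) (P.le_maxAbv v z i)

theorem spread_nonneg (hz : P.IsUnitSol z) (v : ι) : 0 ≤ P.spread v z :=
  sub_nonneg.mpr (hz.logMin_le v _)

theorem logMax_sub_le_of_ne_minIdx (hz : P.IsUnitSol z) (v : ι) {j : Fin 3}
    (hj : j ≠ P.minIdx v z) :
    P.logMax v z - P.logAddConst v ≤ P.logAbv v (unitTriple z j) := by
  have hlog := Real.log_le_log (hz.maxAbv_pos v) (P.maxAbv_le_of_ne_minIdx v z hj)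
  rw [Real.log_mul (P.addConst_pos v).ne' ((P.abv v).ne_zero (hz.unitTriple_ne_zero j))] at hlog
  rw [logMax, logAddConst, logAbv, ← mul_sub]
  gcongr
  linarith

theorem sum_logAbv_le (hz : P.IsUnitSol z) (v : ι) :
    ∑ i, P.logAbv v (unitTriple z i) ≤ P.logMin v z + 2 * P.logMax v z := by
  have hmin : P.logAbv v (unitTriple z (P.minIdx v z)) = P.logMin v z := rfl
  rw [sum_fin_three_of_ne _ (i := P.minIdx v z) (j := P.minIdx v z + 1) (k := P.minIdx v z + 2)
    (by simp) (by simp) (by simp)]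
  linarith [hz.le_logMax v (P.minIdx v z + 1), hz.le_logMax v (P.minIdx v z + 2)]

theorem le_sum_logAbv (hz : P.IsUnitSol z) (v : ι) :
    P.logMin v z + 2 * P.logMax v z - P.logAddConst v ≤ ∑ i, P.logAbv v (unitTriple z i) := by
  have hmin : P.logAbv v (unitTriple z (P.minIdx v z)) = P.logMin v z := rfl
  have hmax : P.logAbv v (unitTriple z (P.maxIdx v z)) = P.logMax v z := rfl
  have h₁ := hz.logMax_sub_le_of_ne_minIdx v (j := P.minIdx v z + 1) (by simp)
  have h₂ := hz.logMax_sub_le_of_ne_minIdx v (j := P.minIdx v z + 2) (by simp)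
  rw [sum_fin_three_of_ne _ (i := P.minIdx v z) (j := P.minIdx v z + 1) (k := P.minIdx v z + 2)
    (by simp) (by simp) (by simp)]
  rcases fin_three_eq_or_eq_add_one_or_eq_add_two (P.maxIdx v z) (P.minIdx v z) with h | h | h <;>
    rw [h] at hmax
  · linarith [hz.logMin_le v (P.minIdx v z + 1)]
  · linarith
  · linarith

theorem sum_sum_logAbv_eq_zero (hz : P.IsUnitSol z) :
    ∑ v, ∑ i, P.logAbv v (unitTriple z i) = 0 := by
  rw [Finset.sum_comm]
  exact Finset.sum_eq_zero fun i _ => hz.sum_logAbv_unitTriple i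

theorem sum_spread_le (hz : P.IsUnitSol z) : ∑ v, P.spread v z ≤ 3 * P.height z := by
  have h := Finset.sum_le_sum fun v (_ : v ∈ Finset.univ) => hz.sum_logAbv_le v
  rw [hz.sum_sum_logAbv_eq_zero, Finset.sum_add_distrib, ← Finset.mul_sum] at h
  simp only [spread, height, Finset.sum_sub_distrib]
  linarith

theorem le_sum_spread (hz : P.IsUnitSol z) : 3 * P.height z - P.archLog ≤ ∑ v, P.spread v z := by
  have h := Finset.sum_le_sum fun v (_ : v ∈ Finset.univ) => hz.le_sum_logAbv v
  rw [hz.sum_sum_logAbv_eq_zero, Finset.sum_sub_distrib, Finset.sum_add_distrib,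
    ← Finset.mul_sum] at h
  simp only [spread, height, archLog, Finset.sum_sub_distrib]
  linarith

theorem padeTriple_mem (hz : P.IsUnitSol z) (N : ℕ) (i : Fin 3) :
    padeTriple N z i ∈ P.integers :=
  mul_mem (pow_mem (hz.unitTriple_mem i) _) <| sum_mem fun _ _ =>
    mul_mem (natCast_mem _ _) <|
      mul_mem (pow_mem (hz.unitTriple_mem _) _) (pow_mem (neg_mem (hz.unitTriple_mem _)) _)

theorem padePairing_mem (hw : P.IsUnitSol w) (hz : P.IsUnitSol z) (N : ℕ) :
    padePairing N w z ∈ P.integers :=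
  sub_mem (mul_mem (hw.unitTriple_mem _) (hz.padeTriple_mem _ _))
    (mul_mem (hw.unitTriple_mem _) (hz.padeTriple_mem _ _))

end IsUnitSol

variable (P) in
theorem abv_padeTriple_le (v : ι) (z : K) (N : ℕ) (i : Fin 3) :
    P.abv v (padeTriple N z i) ≤
      P.abv v (unitTriple z i) ^ (2 * N + 1) * (P.addConst v ^ (4 * N) * P.maxAbv v z ^ N) := by
  rw [padeTriple, map_mul, map_pow]
  refine mul_le_mul_of_nonneg_left (abv_padeForm_le N (P.le_maxAbv v z _) ?_) (by positivity)
  rw [(P.abv v).map_neg]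
  exact P.le_maxAbv v z _

variable [CharZero K]

theorem abv_padePairing_le_or {v : ι} (hidx : P.minIdx v w = P.minIdx v z) (N : ℕ) :
    P.abv v (padePairing N w z) ≤
        P.addConst v ^ (4 * N + 1) * (P.minAbv v w * P.maxAbv v z ^ (3 * N + 1)) ∨
      P.abv v (padePairing N w z) ≤
        P.addConst v ^ (4 * N + 1) *
          (P.maxAbv v w * (P.minAbv v z ^ (2 * N + 1) * P.maxAbv v z ^ N)) := by
  have hmaxz : 0 ≤ P.maxAbv v z := (P.abv v).nonneg _
  have hconst := (P.addConst_pos v).le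
  have hpairing := P.abv_sub_le v (unitTriple w (P.minIdx v z) * padeTriple N z (P.minIdx v z + 1))
    (unitTriple w (P.minIdx v z + 1) * padeTriple N z (P.minIdx v z))
  rw [← padePairing_eq_cyclic, map_mul, map_mul, mul_max_of_nonneg _ _ hconst, le_max_iff]
    at hpairing
  rw [← hidx] at hpairing
  refine hpairing.imp (fun h => h.trans ?_) (fun h => h.trans ?_)
  · grw [abv_padeTriple_le, P.le_maxAbv v z (P.minIdx v w + 1)]
    exact le_of_eq (by simp only [minAbv]; ring)
  · grw [abv_padeTriple_le, P.le_maxAbv v w (P.minIdx v w + 1)]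
    exact le_of_eq (by simp only [minAbv, hidx]; ring)

namespace IsUnitSol

theorem logAbv_padePairing_le (hw : P.IsUnitSol w) (hz : P.IsUnitSol z) {v : ι}
    (hidx : P.minIdx v w = P.minIdx v z) {N : ℕ} (hne : padePairing N w z ≠ 0) :
    P.logAbv v (padePairing N w z) ≤ (4 * N + 1) * P.logAddConst v + P.logMax v w +
      (3 * N + 1) * P.logMax v z - min (P.spread v w) ((2 * N + 1) * P.spread v z) := by
  have hconst := P.addConst_pos v
  have hminz := hz.minAbv_pos v
  have hminw := hw.minAbv_pos v
  have hmaxz := hz.maxAbv_pos v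
  have hmaxw := hw.maxAbv_pos v
  have hpos : 0 < P.abv v (padePairing N w z) := (P.abv v).pos hne
  have hweight : (0 : ℝ) ≤ P.weight v := Nat.cast_nonneg _
  rw [le_sub_comm, min_le_iff]
  simp only [logAbv, logAddConst, spread, logMax, logMin]
  refine (abv_padePairing_le_or hidx N).imp (fun h => ?_) (fun h => ?_)
  all_goals
    replace h := mul_le_mul_of_nonneg_left (Real.log_le_log hpos h) hweight
    simp only [Real.log_mul, Real.log_pow, ne_eq, hconst.ne', hminz.ne', hminw.ne', hmaxz.ne',
      hmaxw.ne', not_false_eq_true, pow_ne_zero, mul_eq_zero, or_self,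
      Nat.cast_add, Nat.cast_mul, Nat.cast_ofNat, Nat.cast_one] at h
    linarith

theorem sum_min_spread_le (hw : P.IsUnitSol w) (hz : P.IsUnitSol z)
    (hidx : ∀ v, P.minIdx v w = P.minIdx v z) {N : ℕ} (hne : padePairing N w z ≠ 0) :
    ∑ v, min (P.spread v w) ((2 * N + 1) * P.spread v z) ≤
      P.height w + (3 * N + 1) * P.height z + (4 * N + 1) * P.archLog := by
  have hint := sum_logAbv_nonneg (hw.padePairing_mem hz N) hne
  have hle := Finset.sum_le_sum fun v (_ : v ∈ Finset.univ) =>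
    hw.logAbv_padePairing_le hz (hidx v) hne
  simp only [Finset.sum_sub_distrib, Finset.sum_add_distrib, ← Finset.mul_sum] at hle
  unfold height archLog
  linarith

end IsUnitSol

omit [CharZero K] in
theorem sq_sub_add_one_ne_zero_of_height_pos (hpos : 0 < P.height z) : z ^ 2 - z + 1 ≠ 0 := by
  intro hcyc
  have hcube : z ^ 3 = -1 := by linear_combination (z + 1) * hcyc
  have habv (v : ι) : P.abv v z = 1 := by
    refine (pow_eq_one_iff_of_nonneg ((P.abv v).nonneg z) three_ne_zero).mp ?_
    rw [← map_pow, hcube, (P.abv v).map_neg, (P.abv v).map_one]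
  have htriple (v : ι) (i : Fin 3) : P.abv v (unitTriple z i) = 1 := by
    fin_cases i
    · exact habv v
    · change P.abv v (1 - z) = 1
      rw [show 1 - z = -z ^ 2 by linear_combination hcyc, (P.abv v).map_neg, map_pow, habv, one_pow]
    · change P.abv v (-1) = 1
      rw [(P.abv v).map_neg, (P.abv v).map_one]
  simp [height, logMax, maxAbv, htriple] at hpos

end PlaceSystem

/-! ### Counting points with large gaps between their heights -/

/-- A finite set of points `C` with a height function `h` that obeys the gap principle of Padé
approximation. `Exc N z w` says that the `N`-th approximation attached to `z` is exact at `w`; when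
it is not, the heights of `z` and `w` are related by `le_of_not_exc`. The constants `L` and `a`
measure the errors at the archimedean and at all places. -/
structure IsGapFamily {α : Type*} (C : Finset α) (h : α → ℝ) (L a : ℝ) (Exc : ℕ → α → α → Prop) :
    Prop where
  error_pos : 0 < L
  four_mul_error_le : ∀ z ∈ C, 4 * L ≤ h z
  error_le_three_mul : ∀ z ∈ C, a ≤ 3 * h z
  le_of_not_exc : ∀ N : ℕ, ∀ z ∈ C, ∀ w ∈ C, ¬Exc N z w →
    2.94 * min (h w) ((2 * N + 1) * h z) ≤
      h w + (3 * N + 1) * h z + (6 * N + 2) * L + 2 * N * a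
  eq_of_exc_zero : ∀ z ∈ C, ∀ w ∈ C, Exc 0 z w → w = z
  eq_of_exc_of_exc : ∀ N, ∀ z ∈ C, ∀ w ∈ C, ∀ w' ∈ C, Exc N z w → Exc N z w' → w = w'
  not_exc_succ : ∀ N, ∀ z ∈ C, ∀ w ∈ C, Exc N z w → ¬Exc (N + 1) z w

theorem card_le_one_of_forall_le_imp_eq {α β : Type*} [LinearOrder β] {s : Finset α} (h : α → β)
    (H : ∀ z ∈ s, ∀ w ∈ s, h z ≤ h w → w = z) : s.card ≤ 1 := by
  refine Finset.card_le_one.mpr fun z hz w hw => ?_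
  rcases le_total (h z) (h w) with hle | hle
  · exact (H z hz w hw hle).symm
  · exact H w hw z hz hle

namespace IsGapFamily

variable {α : Type*} {C : Finset α} {h : α → ℝ} {L a : ℝ} {Exc : ℕ → α → α → Prop}
  (hC : IsGapFamily C h L a Exc) {z w : α}
include hC

theorem gap (hz : z ∈ C) (hw : w ∈ C) (hne : w ≠ z) (hle : h z ≤ h w) :
    1.94 * h z ≤ h w + 2 * L := by
  have hgap := hC.le_of_not_exc 0 z hz w hw (mt (hC.eq_of_exc_zero z hz w hw) hne)
  norm_num [min_eq_right hle] at hgap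
  linarith

theorem card_filter_le_add_one {t t' : ℝ} (ht : t' ≤ 1.94 * t - 2 * L) :
    (C.filter (t ≤ h ·)).card ≤ (C.filter (t' ≤ h ·)).card + 1 := by
  have hinterval : (C.filter fun z => t ≤ h z ∧ h z < t').card ≤ 1 := by
    refine card_le_one_of_forall_le_imp_eq h fun z hz w hw hle => ?_
    rw [Finset.mem_filter] at hz hw
    by_contra hne
    linarith [hC.gap hz.1 hw.1 hne hle]
  have hcover : C.filter (t ≤ h ·) ⊆
      C.filter (t' ≤ h ·) ∪ C.filter fun z => t ≤ h z ∧ h z < t' := by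
    intro z hz
    rw [Finset.mem_filter] at hz
    rcases le_or_gt t' (h z) with hle | hlt
    · exact Finset.mem_union_left _ (Finset.mem_filter.mpr ⟨hz.1, hle⟩)
    · exact Finset.mem_union_right _ (Finset.mem_filter.mpr ⟨hz.1, hz.2, hlt⟩)
  grw [Finset.card_le_card hcover, Finset.card_union_le, hinterval]

theorem le_or_le_of_not_exc (hz : z ∈ C) (hw : w ∈ C) (hL : 100 * L ≤ h z) (ha : 25 * a ≤ 3 * h z)
    {N : ℕ} (hexc : ¬Exc N z w) :
    h w ≤ (1.702 * N + 0.527) * h z ∨ (2.58 * N + 1.92) * h z ≤ h w := by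
  have hN : (0 : ℝ) ≤ N := Nat.cast_nonneg N
  have hNL := mul_le_mul_of_nonneg_left hL hN
  have hNa := mul_le_mul_of_nonneg_left ha hN
  have hpos : 0 < h z := by linarith [hC.error_pos]
  have hNpos : 0 ≤ N * h z := by positivity
  have hpade := hC.le_of_not_exc N z hz w hw hexc
  rcases min_choice (h w) ((2 * N + 1) * h z) with hmin | hmin <;> rw [hmin] at hpade
  · left
    linarith
  · right
    linarith

/- The intervals `(1.702 N + 0.527, 2.58 N + 1.92)` of ratios for which the `N`-th approximation
must be exact overlap for consecutive `N` as soon as the ratio is at least `9`. -/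
theorem lt_nine_mul (hz : z ∈ C) (hw : w ∈ C) (hL : 100 * L ≤ h z) (ha : 25 * a ≤ 3 * h z) :
    h w < 9 * h z := by
  by_contra! hnine
  have hpos : 0 < h z := by linarith [hC.error_pos]
  obtain ⟨r, hr⟩ : ∃ r, h w = r * h z := ⟨h w / h z, (div_mul_cancel₀ _ hpos.ne').symm⟩
  rw [hr, mul_le_mul_iff_left₀ hpos] at hnine
  have hexc (N : ℕ) (hlow : 1.702 * N + 0.527 < r) (hhigh : r < 2.58 * N + 1.92) : Exc N z w := by
    by_contra hN
    have hratio := hC.le_or_le_of_not_exc hz hw hL ha hN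
    rw [hr, mul_le_mul_iff_left₀ hpos, mul_le_mul_iff_left₀ hpos] at hratio
    rcases hratio with h | h <;> linarith
  have hfloor := Nat.floor_le (a := (r - 1.92) / 2.58) (by apply div_nonneg <;> linarith)
  have hlt := Nat.lt_floor_add_one ((r - 1.92) / 2.58)
  rw [le_div_iff₀ (by norm_num)] at hfloor
  rw [div_lt_iff₀ (by norm_num)] at hlt
  refine hC.not_exc_succ (⌊(r - 1.92) / 2.58⌋₊ + 1) z hz w hw (hexc _ ?_ ?_) (hexc _ ?_ ?_) <;>
    · push_cast
      linarith

theorem near_or_exc (hz : z ∈ C) (hw : w ∈ C) (hL : 100 * L ≤ h z) (ha : 25 * a ≤ 3 * h z) :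
    h w ≤ 2.23 * h z ∨ ∃ N ∈ Finset.Icc 1 3, Exc N z w := by
  by_contra! hcon
  have hnine := hC.lt_nine_mul hz hw hL ha
  have hpos : 0 < h z := by linarith [hC.error_pos]
  have h₁ := hC.le_or_le_of_not_exc hz hw hL ha (hcon.2 1 (by simp))
  have h₂ := hC.le_or_le_of_not_exc hz hw hL ha (hcon.2 2 (by simp))
  have h₃ := hC.le_or_le_of_not_exc hz hw hL ha (hcon.2 3 (by simp))
  norm_num at h₁ h₂ h₃
  rcases h₁ with h₁ | h₁
  · linarith
  rcases h₂ with h₂ | h₂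
  · linarith
  rcases h₃ with h₃ | h₃ <;> linarith

theorem card_near_le_one (hz : z ∈ C) (hL : 100 * L ≤ h z) :
    (C.filter fun w => w ≠ z ∧ h z ≤ h w ∧ h w ≤ 2.23 * h z).card ≤ 1 := by
  refine card_le_one_of_forall_le_imp_eq h fun x hx w hw hle => ?_
  rw [Finset.mem_filter] at hx hw
  by_contra hne
  linarith [hC.gap hz hx.1 hx.2.1 hx.2.2.1, hC.gap hx.1 hw.1 hne hle, hC.error_pos]

theorem card_filter_le_five (hz : z ∈ C) (hL : 100 * L ≤ h z) (ha : 25 * a ≤ 3 * h z) :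
    (C.filter (h z ≤ h ·)).card ≤ 5 := by
  let near := C.filter fun w => w ≠ z ∧ h z ≤ h w ∧ h w ≤ 2.23 * h z
  let exact := (Finset.Icc 1 3).biUnion fun N => C.filter (Exc N z ·)
  have hexact : exact.card ≤ 3 := by
    refine (Finset.card_biUnion_le_card_mul _ _ 1 fun N _ => ?_).trans_eq (by simp)
    refine Finset.card_le_one.mpr fun x hx w hw => ?_
    rw [Finset.mem_filter] at hx hw
    exact hC.eq_of_exc_of_exc N z hz x hx.1 w hw.1 hx.2 hw.2
  have hcover : C.filter (h z ≤ h ·) ⊆ {z} ∪ (near ∪ exact) := by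
    intro w hw
    rw [Finset.mem_filter] at hw
    simp only [near, exact, Finset.mem_union, Finset.mem_singleton, Finset.mem_filter,
      Finset.mem_biUnion, hw, true_and]
    by_cases hne : w = z
    · exact Or.inl hne
    · exact Or.inr <| (hC.near_or_exc hz hw.1 hL ha).imp_left fun hle => ⟨hne, hle⟩
  calc
    _ ≤ ({z} ∪ (near ∪ exact)).card := Finset.card_le_card hcover
    _ ≤ 1 + (near.card + exact.card) := by
      grw [Finset.card_union_le, Finset.card_union_le, Finset.card_singleton]
    _ ≤ 1 + (1 + 3) := by grw [hC.card_near_le_one hz hL, hexact]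

/- The thresholds between which there is at most one point are obtained by iterating
`c ↦ 1.94 c - 0.5` starting from `1`. -/
theorem card_le_eleven : C.card ≤ 11 := by
  set b := max (4 * L) (a / 3)
  have hLb : 4 * L ≤ b := le_max_left _ _
  have hab : a / 3 ≤ b := le_max_right _ _
  have hpos := hC.error_pos
  have hbase : C.filter (b ≤ h ·) = C := Finset.filter_true_of_mem fun z hz =>
    max_le (hC.four_mul_error_le z hz) (by linarith [hC.error_le_three_mul z hz])
  have htail : (C.filter (25.39 * b ≤ h ·)).card ≤ 5 := by
    rcases (C.filter (25.39 * b ≤ h ·)).eq_empty_or_nonempty with hempty | hne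
    · simp [hempty]
    obtain ⟨z, hz, hmin⟩ := Finset.exists_min_image _ h hne
    rw [Finset.mem_filter] at hz
    refine (Finset.card_le_card fun w hw => ?_).trans
      (hC.card_filter_le_five hz.1 (by linarith) (by linarith))
    exact Finset.mem_filter.mpr ⟨(Finset.mem_filter.mp hw).1, hmin w hw⟩
  have hstep {c c' : ℝ} (hc : c' ≤ 1.94 * c - 0.5) :
      (C.filter (c * b ≤ h ·)).card ≤ (C.filter (c' * b ≤ h ·)).card + 1 :=
    hC.card_filter_le_add_one (by nlinarith)
  rw [← hbase, ← one_mul b]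
  grw [hstep (c' := 1.44) (by norm_num), hstep (c' := 2.29) (by norm_num),
    hstep (c' := 3.94) (by norm_num), hstep (c' := 7.14) (by norm_num),
    hstep (c' := 13.35) (by norm_num), hstep (c' := 25.39) (by norm_num), htail]

end IsGapFamily

theorem sum_range_pow_le_inv_one_sub {x : ℝ} (h₀ : 0 ≤ x) (h₁ : x < 1) (n : ℕ) :
    ∑ k ∈ Finset.range n, x ^ k ≤ (1 - x)⁻¹ := by
  simpa using geom_sum_Ico_le_of_lt_one (m := 0) (n := n) h₀ h₁

theorem card_mul_le_of_fiber_card_le {α ι Λ : Type*} [Fintype ι] {Z : Finset α} {key : α → ι → Λ}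
    {labels : ι → Finset Λ} {weight : ι → Λ → ℝ} {c : ℝ} {m : ℕ}
    (hlabels : ∀ z ∈ Z, ∀ i, key z i ∈ labels i) (hweight : ∀ i l, 0 ≤ weight i l)
    (hle : ∀ z ∈ Z, c ≤ ∏ i, weight i (key z i))
    (hfiber : ∀ C ⊆ Z, (∀ z ∈ C, ∀ w ∈ C, key z = key w) → C.card ≤ m) :
    Z.card * c ≤ m * ∏ i, ∑ l ∈ labels i, weight i l := by
  have hcard (κ : ι → Λ) : (Z.filter fun z => key z = κ).card ≤ m :=
    hfiber _ (Finset.filter_subset _ _) fun z hz w hw =>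
      (Finset.mem_filter.mp hz).2.trans (Finset.mem_filter.mp hw).2.symm
  calc
    Z.card * c ≤ ∑ z ∈ Z, ∏ i, weight i (key z i) := by
      simpa using Finset.card_nsmul_le_sum Z _ c hle
    _ = ∑ κ ∈ Fintype.piFinset labels, ∑ z ∈ Z with key z = κ, ∏ i, weight i (key z i) :=
      (Finset.sum_fiberwise_of_maps_to (fun z hz => Fintype.mem_piFinset.mpr (hlabels z hz)) _).symm
    _ ≤ ∑ κ ∈ Fintype.piFinset labels, m * ∏ i, weight i (κ i) := by
      refine Finset.sum_le_sum fun κ _ => ?_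
      rw [Finset.sum_congr rfl (g := fun _ => ∏ i, weight i (κ i))
        (fun z hz => by rw [(Finset.mem_filter.mp hz).2]), Finset.sum_const, nsmul_eq_mul]
      exact mul_le_mul_of_nonneg_right (by exact_mod_cast hcard κ)
        (Finset.prod_nonneg fun i _ => hweight _ _)
    _ = m * ∏ i, ∑ l ∈ labels i, weight i l := by rw [Finset.prod_univ_sum, Finset.mul_sum]

/-! ### Solutions of large height -/

section QuantizedShare

variable {ι : Type*} {S : Finset ι} {a b : ι → ℝ}

/-- The share of `a v` in the total `∑ u ∈ S, a u`, rounded down to a multiple of `1 / (50 |S|)`. -/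
noncomputable def quantizedShare (S : Finset ι) (a : ι → ℝ) (v : ι) : ℕ :=
  ⌊50 * S.card * a v / ∑ u ∈ S, a u⌋₊

theorem quantizedShare_const_mul {c : ℝ} (hc : c ≠ 0) (v : ι) :
    quantizedShare S (fun u => c * a u) v = quantizedShare S a v := by
  simp only [quantizedShare, ← Finset.mul_sum, mul_left_comm _ c]
  rw [mul_div_mul_left _ _ hc]

theorem quantizedShare_mul_sum_le (ha : ∀ u ∈ S, 0 ≤ a u) {v : ι} (hv : v ∈ S) :
    quantizedShare S a v * ∑ u ∈ S, a u ≤ 50 * S.card * a v := by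
  have hav := ha v hv
  rcases (Finset.sum_nonneg ha).eq_or_lt with h | h
  · rw [← h, mul_zero]
    positivity
  · exact (le_div_iff₀ h).mp (Nat.floor_le (by positivity))

theorem sum_quantizedShare_le (ha : ∀ u ∈ S, 0 ≤ a u) :
    ∑ v ∈ S, quantizedShare S a v ≤ 50 * S.card := by
  rcases (Finset.sum_nonneg ha).eq_or_lt with h | h
  · simp [quantizedShare, ← h]
  have hsum := Finset.sum_le_sum fun v hv => quantizedShare_mul_sum_le ha (v := v) hv
  rw [← Finset.sum_mul, ← Finset.mul_sum] at hsum
  exact_mod_cast le_of_mul_le_mul_right hsum h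

theorem le_sum_quantizedShare (h : 0 < ∑ u ∈ S, a u) :
    (49 * S.card : ℝ) ≤ ∑ v ∈ S, (quantizedShare S a v : ℝ) := by
  have hsum := Finset.sum_le_sum fun v (_ : v ∈ S) =>
    (Nat.lt_floor_add_one (50 * S.card * a v / ∑ u ∈ S, a u)).le
  rw [← Finset.sum_div, ← Finset.mul_sum, mul_div_cancel_right₀ _ h.ne', Finset.sum_add_distrib,
    Finset.sum_const, nsmul_eq_mul, mul_one] at hsum
  simp only [quantizedShare]
  linarith

theorem min_sum_le_sum_min (ha : ∀ v ∈ S, 0 ≤ a v) (hb : ∀ v ∈ S, 0 ≤ b v)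
    (hab : ∀ v ∈ S, quantizedShare S a v = quantizedShare S b v) :
    0.98 * min (∑ v ∈ S, a v) (∑ v ∈ S, b v) ≤ ∑ v ∈ S, min (a v) (b v) := by
  set m := min (∑ v ∈ S, a v) (∑ v ∈ S, b v)
  have hnonneg : 0 ≤ ∑ v ∈ S, min (a v) (b v) :=
    Finset.sum_nonneg fun v hv => le_min (ha v hv) (hb v hv)
  rcases le_or_gt m 0 with hm | hm
  · linarith
  have hcard : (0 : ℝ) < S.card := by
    rw [Nat.cast_pos, Finset.card_pos]
    exact Finset.nonempty_of_sum_ne_zero (hm.trans_le (min_le_left _ _)).ne'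
  have hshare (v) (hv : v ∈ S) : quantizedShare S a v * m ≤ 50 * S.card * min (a v) (b v) := by
    rw [mul_min_of_nonneg (a v) (b v) (by positivity : (0 : ℝ) ≤ 50 * S.card)]
    refine le_min ?_ ?_
    · exact (mul_le_mul_of_nonneg_left (min_le_left _ _) (Nat.cast_nonneg _)).trans
        (quantizedShare_mul_sum_le ha hv)
    · rw [hab v hv]
      exact (mul_le_mul_of_nonneg_left (min_le_right _ _) (Nat.cast_nonneg _)).trans
        (quantizedShare_mul_sum_le hb hv)
  have hsum := Finset.sum_le_sum hshare
  rw [← Finset.sum_mul, ← Finset.mul_sum] at hsum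
  have hlow := mul_le_mul_of_nonneg_right
    (le_sum_quantizedShare (hm.trans_le (min_le_left _ _))) hm.le
  refine le_of_mul_le_mul_left ?_ hcard
  linarith

end QuantizedShare

namespace PlaceSystem

variable {K : Type*} [Field K] {ι : Type*} [Fintype ι] (P : PlaceSystem K ι) {z w : K}

/-- A finite set of solutions of the unit equation `z + (1 - z) = 1` in which the absolute values of
`z` and `1 - z` at the places outside `S` do not depend on `z`. -/
structure IsUnitFamily (Z : Finset K) : Prop where
  isUnitSol : ∀ z ∈ Z, P.IsUnitSol z
  abv_eq : ∀ v ∉ P.S, ∀ z ∈ Z, ∀ w ∈ Z, P.abv v z = P.abv v w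
  abv_one_sub_eq : ∀ v ∉ P.S, ∀ z ∈ Z, ∀ w ∈ Z, P.abv v (1 - z) = P.abv v (1 - w)

/-- The total spread over the places in `S`. -/
noncomputable def spreadIn (z : K) : ℝ := ∑ v ∈ P.S, P.spread v z

/-- The total spread over the places outside `S`. -/
noncomputable def spreadOut (z : K) : ℝ := ∑ v ∈ P.Sᶜ, P.spread v z

theorem one_le_weight (v : ι) : 1 ≤ P.weight v := by
  by_cases hv : v ∈ P.arch
  · rcases P.weight_of_mem v hv with h | h <;> omega
  · exact (P.weight_of_notMem v hv).ge

theorem archLog_eq : P.archLog = Real.log 2 * ∑ v ∈ P.arch, (P.weight v : ℝ) := by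
  simp only [archLog, logAddConst, addConst, apply_ite Real.log, Real.log_one, mul_ite, mul_zero]
  rw [Finset.sum_ite_mem, Finset.univ_inter, ← Finset.sum_mul, mul_comm]

theorem archLog_pos : 0 < P.archLog := by
  rw [archLog_eq]
  refine mul_pos (Real.log_pos one_lt_two) (Finset.sum_pos (fun v _ => ?_) P.arch_nonempty)
  exact_mod_cast P.one_le_weight v

theorem sum_spread (z : K) : ∑ v, P.spread v z = P.spreadIn z + P.spreadOut z :=
  (Finset.sum_add_sum_compl _ _).symm

variable {P} {Z : Finset K}

namespace IsUnitSol

theorem spreadIn_nonneg (hz : P.IsUnitSol z) : 0 ≤ P.spreadIn z :=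
  Finset.sum_nonneg fun v _ => hz.spread_nonneg v

theorem spreadOut_nonneg (hz : P.IsUnitSol z) : 0 ≤ P.spreadOut z :=
  Finset.sum_nonneg fun v _ => hz.spread_nonneg v

theorem min_spreadIn_le (hw : P.IsUnitSol w) (hz : P.IsUnitSol z)
    (hshare : ∀ v ∈ P.S,
      quantizedShare P.S (P.spread · w) v = quantizedShare P.S (P.spread · z) v) (N : ℕ) :
    0.98 * min (P.spreadIn w) ((2 * N + 1) * P.spreadIn z) ≤
      ∑ v ∈ P.S, min (P.spread v w) ((2 * N + 1) * P.spread v z) := by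
  unfold spreadIn
  rw [Finset.mul_sum]
  refine min_sum_le_sum_min (fun v _ => hw.spread_nonneg v)
    (fun v _ => mul_nonneg (by positivity) (hz.spread_nonneg v)) fun v hv => ?_
  rw [hshare v hv, quantizedShare_const_mul (by positivity)]

end IsUnitSol

namespace IsUnitFamily

variable {v : ι} (hZ : P.IsUnitFamily Z)
include hZ

theorem abv_unitTriple_eq (hv : v ∉ P.S) (hz : z ∈ Z) (hw : w ∈ Z) (i : Fin 3) :
    P.abv v (unitTriple z i) = P.abv v (unitTriple w i) := by
  fin_cases i
  · exact hZ.abv_eq v hv z hz w hw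
  · exact hZ.abv_one_sub_eq v hv z hz w hw
  · rfl

theorem minIdx_eq (hv : v ∉ P.S) (hz : z ∈ Z) (hw : w ∈ Z) : P.minIdx v z = P.minIdx v w := by
  simp only [minIdx, hZ.abv_unitTriple_eq hv hz hw]

theorem spread_eq (hv : v ∉ P.S) (hz : z ∈ Z) (hw : w ∈ Z) : P.spread v z = P.spread v w := by
  have hmax : P.maxIdx v z = P.maxIdx v w := by
    simp only [maxIdx, hZ.abv_unitTriple_eq hv hz hw]
  simp only [spread, logMax, logMin, maxAbv, minAbv, hmax, hZ.minIdx_eq hv hz hw,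
    hZ.abv_unitTriple_eq hv hz hw]

theorem spreadOut_eq (hz : z ∈ Z) (hw : w ∈ Z) : P.spreadOut z = P.spreadOut w :=
  Finset.sum_congr rfl fun _ hv => hZ.spread_eq (Finset.mem_compl.mp hv) hz hw

theorem spreadOut_le_sum_min (hz : z ∈ Z) (hw : w ∈ Z) (N : ℕ) :
    P.spreadOut z ≤ ∑ v ∈ P.Sᶜ, min (P.spread v w) ((2 * N + 1) * P.spread v z) := by
  refine Finset.sum_le_sum fun v hv => ?_
  rw [hZ.spread_eq (Finset.mem_compl.mp hv) hw hz]
  exact le_min le_rfl (le_mul_of_one_le_left ((hZ.isUnitSol z hz).spread_nonneg v)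
    (by linarith [Nat.cast_nonneg (α := ℝ) N]))

theorem min_height_le [CharZero K] (hz : z ∈ Z) (hw : w ∈ Z)
    (hidx : ∀ v ∈ P.S, P.minIdx v w = P.minIdx v z)
    (hshare : ∀ v ∈ P.S,
      quantizedShare P.S (P.spread · w) v = quantizedShare P.S (P.spread · z) v)
    {N : ℕ} (hne : padePairing N w z ≠ 0) :
    2.94 * min (P.height w) ((2 * N + 1) * P.height z) ≤
      P.height w + (3 * N + 1) * P.height z + (6 * N + 2) * P.archLog +
        2 * N * P.spreadOut z := by
  have hsz := hZ.isUnitSol z hz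
  have hsw := hZ.isUnitSol w hw
  have hpade := hsw.sum_min_spread_le hsz (fun v => by
    by_cases hv : v ∈ P.S
    · exact hidx v hv
    · exact hZ.minIdx_eq hv hw hz) hne
  rw [← Finset.sum_add_sum_compl P.S] at hpade
  have hin := hsw.min_spreadIn_le hsz hshare N
  have hout := hZ.spreadOut_le_sum_min hz hw N
  have hspreadz := hsz.le_sum_spread
  have hspreadw := hsw.le_sum_spread
  rw [sum_spread] at hspreadz hspreadw
  rw [hZ.spreadOut_eq hw hz] at hspreadw
  have hNL : 0 ≤ N * P.archLog := mul_nonneg N.cast_nonneg P.archLog_pos.le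
  have hNout : 0 ≤ N * P.spreadOut z := mul_nonneg N.cast_nonneg hsz.spreadOut_nonneg
  have hmin : 3 * min (P.height w) ((2 * N + 1) * P.height z) - (2 * N + 1) * P.archLog -
      (2 * N + 1) * P.spreadOut z ≤ min (P.spreadIn w) ((2 * N + 1) * P.spreadIn z) := by
    refine le_min ?_ ?_
    · linarith [min_le_left (P.height w) ((2 * N + 1) * P.height z), P.archLog_pos]
    · have hscaled := mul_le_mul_of_nonneg_left hspreadz (by positivity : (0 : ℝ) ≤ 2 * N + 1)
      linarith [min_le_right (P.height w) ((2 * N + 1) * P.height z)]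
  linarith [P.archLog_pos, hsz.spreadOut_nonneg]

theorem isGapFamily [CharZero K] {C : Finset K} (hCZ : C ⊆ Z) {z₀ : K} (hz₀ : z₀ ∈ Z)
    (hheight : ∀ z ∈ C, 4 * P.archLog ≤ P.height z)
    (hidx : ∀ z ∈ C, ∀ w ∈ C, ∀ v ∈ P.S, P.minIdx v w = P.minIdx v z)
    (hshare : ∀ z ∈ C, ∀ w ∈ C, ∀ v ∈ P.S,
      quantizedShare P.S (P.spread · w) v = quantizedShare P.S (P.spread · z) v) :
    IsGapFamily C P.height P.archLog (P.spreadOut z₀) fun N z w => padePairing N w z = 0 := by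
  have hcyc (z) (hz : z ∈ C) : z ^ 2 - z + 1 ≠ 0 :=
    P.sq_sub_add_one_ne_zero_of_height_pos (by linarith [hheight z hz, P.archLog_pos])
  refine
    { error_pos := P.archLog_pos
      four_mul_error_le := hheight
      error_le_three_mul := fun z hz => ?_
      le_of_not_exc := fun N z hz w hw hne => ?_
      eq_of_exc_zero := fun z _ w _ h => by rwa [padePairing_zero, sub_eq_zero] at h
      eq_of_exc_of_exc := fun N z hz w _ w' _ hw hw' => ?_
      not_exc_succ := fun N z hz w _ hw => ?_ }
  · have hsz := hZ.isUnitSol z (hCZ hz)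
    have hspread := hsz.sum_spread_le
    rw [sum_spread] at hspread
    rw [hZ.spreadOut_eq hz₀ (hCZ hz)]
    linarith [hsz.spreadIn_nonneg]
  · rw [hZ.spreadOut_eq hz₀ (hCZ hz)]
    exact hZ.min_height_le (hCZ hz) (hCZ hw) (hidx z hz w hw) (hshare z hz w hw) hne
  · have hsz := hZ.isUnitSol z (hCZ hz)
    exact eq_of_padePairing_eq_zero hsz.ne_zero hsz.ne_one (hcyc z hz) hw hw'
  · have hsz := hZ.isUnitSol z (hCZ hz)
    exact padePairing_succ_ne_zero hsz.ne_zero hsz.ne_one (hcyc z hz) hw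

theorem card_large_le [CharZero K] :
    ((Z.filter fun z => 4 * P.archLog ≤ P.height z).card : ℝ) ≤ 11 * 412 ^ P.S.card := by
  set Z' := Z.filter fun z => 4 * P.archLog ≤ P.height z with hZ'
  let key (z : K) (v : P.S) : Fin 3 × ℕ := (P.minIdx v z, quantizedShare P.S (P.spread · z) v)
  have hkeySum (z) (hz : z ∈ Z') : ∑ v : P.S, (key z v).2 ≤ 50 * P.S.card := by
    rw [Finset.sum_coe_sort P.S (quantizedShare P.S (P.spread · z))]
    exact sum_quantizedShare_le fun v _ =>
      (hZ.isUnitSol z (Finset.mem_filter.mp hz).1).spread_nonneg v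
  have hfiber (C) (hC : C ⊆ Z') (hkey : ∀ z ∈ C, ∀ w ∈ C, key z = key w) : C.card ≤ 11 := by
    rcases C.eq_empty_or_nonempty with rfl | ⟨z₀, hz₀⟩
    · simp
    exact (hZ.isGapFamily (hC.trans (Finset.filter_subset _ _)) (Finset.mem_filter.mp (hC hz₀)).1
      (fun z hz => (Finset.mem_filter.mp (hC hz)).2)
      (fun z hz w hw v hv => congrArg Prod.fst (congrFun (hkey w hw z hz) ⟨v, hv⟩))
      (fun z hz w hw v hv =>
        congrArg Prod.snd (congrFun (hkey w hw z hz) ⟨v, hv⟩))).card_le_eleven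
  have hgeom : ∑ l ∈ Finset.univ (α := Fin 3) ×ˢ Finset.range (50 * P.S.card + 1),
      (50 / 51 : ℝ) ^ l.2 ≤ 153 := by
    simp only [Finset.sum_product, Finset.sum_const, Finset.card_univ, Fintype.card_fin,
      nsmul_eq_mul]
    grw [sum_range_pow_le_inv_one_sub (by norm_num) (by norm_num)]
    norm_num
  have hcount := card_mul_le_of_fiber_card_le (Z := Z') (key := key)
    (labels := fun _ => Finset.univ ×ˢ Finset.range (50 * P.S.card + 1))
    (weight := fun _ l => (50 / 51 : ℝ) ^ l.2) (c := ((50 / 51) ^ 50) ^ P.S.card)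
    (fun z hz v => ?_) (fun _ _ => by positivity) (fun z hz => ?_) hfiber
  · rw [Finset.prod_const, Finset.card_univ, Fintype.card_coe] at hcount
    refine le_of_mul_le_mul_right (hcount.trans ?_) (by positivity)
    grw [hgeom]
    rw [Nat.cast_ofNat, mul_assoc, ← mul_pow]
    gcongr
    norm_num
  · rw [Finset.mem_product, Finset.mem_range, Nat.lt_succ_iff]
    exact ⟨Finset.mem_univ _, (Finset.single_le_sum (fun _ _ => Nat.zero_le _)
      (Finset.mem_univ v)).trans (hkeySum z hz)⟩
  · rw [Finset.prod_pow_eq_pow_sum, ← pow_mul]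
    exact pow_le_pow_of_le_one (by norm_num) (by norm_num) (hkeySum z hz)

end IsUnitFamily

end PlaceSystem

/-! ### Solutions of small height -/

/-- For `0 < r ≤ 1`, the exponent `k` with `2⁻¹ ^ (k + 1) < r ≤ 2⁻¹ ^ k`. -/
noncomputable def dyadicExp (r : ℝ) : ℕ := Nat.log 2 ⌊r⁻¹⌋₊

section DyadicExp

variable {r s : ℝ}

theorem le_two_inv_pow_dyadicExp (h₀ : 0 < r) (h₁ : r ≤ 1) : r ≤ 2⁻¹ ^ dyadicExp r := by
  have hfloor : ⌊r⁻¹⌋₊ ≠ 0 := (Nat.floor_pos.mpr ((one_le_inv₀ h₀).mpr h₁)).ne'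
  rw [inv_pow, le_inv_comm₀ h₀ (by positivity)]
  exact_mod_cast (Nat.le_floor_iff (by positivity)).mp (Nat.pow_log_le_self 2 hfloor)

theorem two_inv_pow_dyadicExp_succ_lt (h₀ : 0 < r) : 2⁻¹ ^ (dyadicExp r + 1) < r := by
  rw [inv_pow, inv_lt_comm₀ (by positivity) h₀]
  exact_mod_cast (Nat.floor_lt (by positivity)).mp
    (Nat.lt_pow_succ_log_self one_lt_two ⌊r⁻¹⌋₊)

theorem half_lt_of_dyadicExp_eq (hr₀ : 0 < r) (hr₁ : r ≤ 1) (hs₀ : 0 < s)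
    (hrs : dyadicExp r = dyadicExp s) : r / 2 < s := by
  have hr := le_two_inv_pow_dyadicExp hr₀ hr₁
  have hs := two_inv_pow_dyadicExp_succ_lt hs₀
  rw [hrs] at hr
  rw [pow_succ] at hs
  linarith

theorem sq_max_le_min_of_dyadicExp_eq (hr₀ : 0 < r) (hr₁ : r ≤ 1) (hs₀ : 0 < s) (hs₁ : s ≤ 1)
    (hr : r < 1 → r ≤ 1 / 2) (hs : s < 1 → s ≤ 1 / 2) (hrs : dyadicExp r = dyadicExp s) :
    max r s ^ 2 ≤ min r s := by
  wlog hle : s ≤ r generalizing r s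
  · rw [max_comm, min_comm]
    exact this hs₀ hs₁ hr₀ hr₁ hs hr hrs.symm (le_of_not_ge hle)
  rw [max_eq_left hle, min_eq_right hle]
  have hhalf := half_lt_of_dyadicExp_eq hr₀ hr₁ hs₀ hrs
  rcases hr₁.lt_or_eq with hlt | rfl
  · nlinarith [hr hlt]
  · by_contra! hcon
    linarith [hs (by linarith)]

end DyadicExp

/-- The number of parts into which the sides of the square of radius `2⁻¹ ^ k` are divided. -/
def gridSize (k : ℕ) : ℕ := if k < 3 then 8 else if k < 9 then 4 else 1

theorem one_le_gridSize (k : ℕ) : 1 ≤ gridSize k := by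
  unfold gridSize
  split_ifs <;> norm_num

theorem two_pow_mul_lt_gridSize_pow (k : ℕ) :
    (2 : ℝ) ^ 17 * (1 / 4) ^ k < (gridSize k : ℝ) ^ 6 := by
  have hanti {j : ℕ} (hj : j ≤ k) : (1 / 4 : ℝ) ^ k ≤ (1 / 4) ^ j :=
    pow_le_pow_of_le_one (by norm_num) (by norm_num) hj
  unfold gridSize
  split_ifs with h₁ h₂
  · grw [hanti (Nat.zero_le k)]
    norm_num
  · grw [hanti (not_lt.mp h₁)]
    norm_num
  · grw [hanti (not_lt.mp h₂)]
    norm_num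

theorem sum_gridSize_sq_mul_pow_le {q : ℝ} (h₀ : 0 ≤ q) (h₁ : q < 1) (n : ℕ) :
    ∑ k ∈ Finset.range n, (gridSize k : ℝ) ^ 2 * q ^ k ≤
      (1 - q)⁻¹ + ∑ k ∈ Finset.range 9, ((gridSize k : ℝ) ^ 2 - 1) * q ^ k := by
  have hexcess (k : ℕ) : 0 ≤ ((gridSize k : ℝ) ^ 2 - 1) * q ^ k := by
    have hone : (1 : ℝ) ≤ gridSize k := by exact_mod_cast one_le_gridSize k
    exact mul_nonneg (sub_nonneg.mpr (one_le_pow₀ hone)) (pow_nonneg h₀ k)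
  have hzero (k : ℕ) (hk : k ∉ Finset.range 9) : ((gridSize k : ℝ) ^ 2 - 1) * q ^ k = 0 := by
    rw [Finset.mem_range] at hk
    simp [gridSize, hk, show ¬k < 3 by omega]
  calc
    _ = ∑ k ∈ Finset.range n, q ^ k +
        ∑ k ∈ Finset.range n, ((gridSize k : ℝ) ^ 2 - 1) * q ^ k := by
      rw [← Finset.sum_add_distrib]
      exact Finset.sum_congr rfl fun k _ => by ring
    _ ≤ _ := by
      refine add_le_add (sum_range_pow_le_inv_one_sub h₀ h₁ n) ?_
      rw [Finset.sum_subset (Finset.range_subset_range.mpr (le_max_right n 9))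
        fun k _ hk => hzero k hk]
      exact Finset.sum_le_sum_of_subset_of_nonneg
        (Finset.range_subset_range.mpr (le_max_left n 9)) fun k _ _ => hexcess k

/-- The position of a coordinate `a ∈ [-2⁻¹ ^ k, 2⁻¹ ^ k]` among `gridSize k` equal parts of that
interval. -/
noncomputable def coordCell (k : ℕ) (a : ℝ) : ℕ := ⌈gridSize k * ((a * 2 ^ k + 1) / 2)⌉₊ - 1

section CoordCell

variable {k : ℕ} {a b : ℝ}

theorem abs_mul_two_pow_le_one (ha : |a| ≤ 2⁻¹ ^ k) : |a * 2 ^ k| ≤ 1 := by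
  rw [abs_mul, abs_of_pos (by positivity : (0 : ℝ) < 2 ^ k)]
  grw [ha]
  rw [← mul_pow, inv_mul_cancel₀ two_ne_zero, one_pow]

theorem coordCell_lt (ha : |a| ≤ 2⁻¹ ^ k) : coordCell k a < gridSize k := by
  have hle := (abs_le.mp (abs_mul_two_pow_le_one ha)).2
  have hceil : ⌈gridSize k * ((a * 2 ^ k + 1) / 2)⌉₊ ≤ gridSize k :=
    Nat.ceil_le.mpr (mul_le_of_le_one_right (Nat.cast_nonneg _) (by linarith))
  have := one_le_gridSize k
  unfold coordCell
  omega

theorem coordCell_mem_Icc (ha : |a| ≤ 2⁻¹ ^ k) :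
    gridSize k * ((a * 2 ^ k + 1) / 2) ∈ Set.Icc (coordCell k a : ℝ) (coordCell k a + 1) := by
  have hle := (abs_le.mp (abs_mul_two_pow_le_one ha)).1
  have hnonneg : 0 ≤ gridSize k * ((a * 2 ^ k + 1) / 2) :=
    mul_nonneg (Nat.cast_nonneg _) (by linarith)
  unfold coordCell
  rcases Nat.eq_zero_or_pos ⌈gridSize k * ((a * 2 ^ k + 1) / 2)⌉₊ with h | h
  · have := Nat.ceil_eq_zero.mp h
    rw [h]
    constructor <;> norm_num <;> linarith
  · rw [Nat.cast_pred h, sub_add_cancel]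
    exact ⟨by linarith [Nat.ceil_lt_add_one hnonneg], Nat.le_ceil _⟩

theorem sq_sub_le_of_coordCell_eq (ha : |a| ≤ 2⁻¹ ^ k) (hb : |b| ≤ 2⁻¹ ^ k)
    (hab : coordCell k a = coordCell k b) :
    (gridSize k : ℝ) ^ 2 * (a - b) ^ 2 ≤ 4 * (1 / 4) ^ k := by
  have hcella := coordCell_mem_Icc ha
  have hcellb := coordCell_mem_Icc hb
  rw [hab] at hcella
  have hsq : (gridSize k * (a - b) * 2 ^ k) ^ 2 ≤ 2 ^ 2 :=
    sq_le_sq' (by linarith [hcella.1, hcellb.2]) (by linarith [hcella.2, hcellb.1])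
  have hpow : (2 ^ k : ℝ) ^ 2 * (1 / 4) ^ k = 1 := by
    rw [← pow_mul, mul_comm k 2, pow_mul, ← mul_pow]
    norm_num
  calc
    _ = (gridSize k * (a - b) * 2 ^ k) ^ 2 * (1 / 4) ^ k := by
      linear_combination -((gridSize k : ℝ) ^ 2 * (a - b) ^ 2) * hpow
    _ ≤ 2 ^ 2 * (1 / 4) ^ k := by gcongr
    _ = _ := by norm_num

end CoordCell

/-- The cell of a nonzero complex number in the grid on the smallest dyadic square around it. -/
noncomputable def complexCell (x : ℂ) : ℕ × ℕ :=
  (coordCell (dyadicExp ‖x‖) x.re, coordCell (dyadicExp ‖x‖) x.im)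

section ComplexCell

variable {x y : ℂ}

theorem abs_re_le_two_inv_pow (h₀ : x ≠ 0) (h₁ : ‖x‖ ≤ 1) : |x.re| ≤ 2⁻¹ ^ dyadicExp ‖x‖ :=
  (Complex.abs_re_le_norm x).trans (le_two_inv_pow_dyadicExp (norm_pos_iff.mpr h₀) h₁)

theorem abs_im_le_two_inv_pow (h₀ : x ≠ 0) (h₁ : ‖x‖ ≤ 1) : |x.im| ≤ 2⁻¹ ^ dyadicExp ‖x‖ :=
  (Complex.abs_im_le_norm x).trans (le_two_inv_pow_dyadicExp (norm_pos_iff.mpr h₀) h₁)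

theorem complexCell_mem (h₀ : x ≠ 0) (h₁ : ‖x‖ ≤ 1) :
    complexCell x ∈ Finset.range (gridSize (dyadicExp ‖x‖)) ×ˢ
      Finset.range (gridSize (dyadicExp ‖x‖)) :=
  Finset.mk_mem_product (Finset.mem_range.mpr (coordCell_lt (abs_re_le_two_inv_pow h₀ h₁)))
    (Finset.mem_range.mpr (coordCell_lt (abs_im_le_two_inv_pow h₀ h₁)))

variable (hx₀ : x ≠ 0) (hx₁ : ‖x‖ ≤ 1) (hy₀ : y ≠ 0) (hy₁ : ‖y‖ ≤ 1)
  (hexp : dyadicExp ‖x‖ = dyadicExp ‖y‖) (hcell : complexCell x = complexCell y)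
include hx₀ hx₁ hy₀ hy₁ hexp hcell

theorem norm_sub_sq_le_of_complexCell_eq :
    (gridSize (dyadicExp ‖x‖) : ℝ) ^ 2 * ‖x - y‖ ^ 2 ≤ 8 * (1 / 4) ^ dyadicExp ‖x‖ := by
  have hyre := abs_re_le_two_inv_pow hy₀ hy₁
  have hyim := abs_im_le_two_inv_pow hy₀ hy₁
  simp only [complexCell, ← hexp, Prod.mk.injEq] at hyre hyim hcell
  have hre := sq_sub_le_of_coordCell_eq (abs_re_le_two_inv_pow hx₀ hx₁) hyre hcell.1
  have him := sq_sub_le_of_coordCell_eq (abs_im_le_two_inv_pow hx₀ hx₁) hyim hcell.2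
  rw [Complex.sq_norm, Complex.normSq_apply, Complex.sub_re, Complex.sub_im]
  linarith

theorem norm_sub_pow_three_lt_of_complexCell_eq : ‖x - y‖ ^ 3 < ‖x‖ * ‖y‖ / 4 := by
  have hnear := norm_sub_sq_le_of_complexCell_eq hx₀ hx₁ hy₀ hy₁ hexp hcell
  have hx := two_inv_pow_dyadicExp_succ_lt (norm_pos_iff.mpr hx₀)
  have hy := two_inv_pow_dyadicExp_succ_lt (norm_pos_iff.mpr hy₀)
  rw [← hexp] at hy
  generalize dyadicExp ‖x‖ = k at hnear hx hy
  have hM : (0 : ℝ) < gridSize k := by exact_mod_cast one_le_gridSize k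
  have hprod : (1 / 4 : ℝ) ^ k / 4 < ‖x‖ * ‖y‖ := by
    refine lt_of_eq_of_lt ?_ (mul_lt_mul'' hx hy (by positivity) (by positivity))
    rw [← mul_pow, pow_succ]
    norm_num
    ring
  have hcube : (gridSize k : ℝ) ^ 6 * (‖x - y‖ ^ 3) ^ 2 <
      (gridSize k : ℝ) ^ 6 * ((1 / 4) ^ k / 16) ^ 2 := by
    calc
      _ = ((gridSize k : ℝ) ^ 2 * ‖x - y‖ ^ 2) ^ 3 := by ring
      _ ≤ (8 * (1 / 4) ^ k) ^ 3 := by gcongr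
      _ = 2 ^ 17 * (1 / 4) ^ k * ((1 / 4 : ℝ) ^ k / 16) ^ 2 := by ring
      _ < _ := by gcongr; exact two_pow_mul_lt_gridSize_pow k
  have hlt := lt_of_pow_lt_pow_left₀ 2 (by positivity)
    (lt_of_mul_lt_mul_left hcube (by positivity))
  linarith

end ComplexCell

namespace PlaceSystem

variable {K : Type*} [Field K] {ι : Type*} [Fintype ι] (P : PlaceSystem K ι)

/-- One of the two entries of `unitTriple z` other than the least one: the local scale of `z`. -/
noncomputable def lead (v : ι) (z : K) : K := unitTriple z (P.minIdx v z + 1)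

/-- The least entry of `unitTriple z` in units of `lead`. Up to the factor `lead`, the triple `z` is
`(ratio, 1, -(1 + ratio))`, so this is a local coordinate near the cusp `0`, `1` or `∞` that is
closest to `z`. -/
noncomputable def ratio (v : ι) (z : K) : K := unitTriple z (P.minIdx v z) / P.lead v z

/-- The dyadic size of `ratio`. -/
noncomputable def ratioExp (v : ι) (z : K) : ℕ := dyadicExp (P.abv v (P.ratio v z))

/-- The grid cell of `ratio` in the completion at an archimedean place; constant elsewhere. -/
noncomputable def ratioCell (v : ι) (z : K) : ℕ × ℕ :=
  if hv : v ∈ P.arch then complexCell ((P.exists_embedding v hv).choose (P.ratio v z)) else (0, 0)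

theorem three_mul_logAbv (v : ι) (x : K) :
    3 * P.logAbv v x = P.weight v * Real.log (P.abv v x ^ 3) := by
  rw [logAbv, Real.log_pow, Nat.cast_ofNat, mul_left_comm]

variable {P} {v : ι} {z w : K}

namespace IsUnitSol

theorem lead_ne_zero (hz : P.IsUnitSol z) (v : ι) : P.lead v z ≠ 0 := hz.unitTriple_ne_zero _

theorem ratio_ne_zero (hz : P.IsUnitSol z) (v : ι) : P.ratio v z ≠ 0 :=
  div_ne_zero (hz.unitTriple_ne_zero _) (hz.lead_ne_zero v)

theorem unitTriple_minIdx (hz : P.IsUnitSol z) (v : ι) :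
    unitTriple z (P.minIdx v z) = P.lead v z * P.ratio v z :=
  (mul_div_cancel₀ _ (hz.lead_ne_zero v)).symm

theorem unitTriple_minIdx_add_two (hz : P.IsUnitSol z) (v : ι) :
    unitTriple z (P.minIdx v z + 2) = -(P.lead v z * (1 + P.ratio v z)) := by
  have hsum := sum_unitTriple z
  rw [sum_fin_three_of_ne _ (i := P.minIdx v z) (j := P.minIdx v z + 1) (k := P.minIdx v z + 2)
    (by simp) (by simp) (by simp), hz.unitTriple_minIdx] at hsum
  rw [lead] at hsum ⊢
  linear_combination hsum

theorem abv_ratio_pos (hz : P.IsUnitSol z) (v : ι) : 0 < P.abv v (P.ratio v z) :=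
  (P.abv v).pos (hz.ratio_ne_zero v)

theorem abv_ratio_le_one (hz : P.IsUnitSol z) (v : ι) : P.abv v (P.ratio v z) ≤ 1 := by
  rw [ratio, map_div₀, div_le_one ((P.abv v).pos (hz.lead_ne_zero v))]
  exact P.minAbv_le v z _

theorem abv_ratio_le_abv_one_add (hz : P.IsUnitSol z) (v : ι) :
    P.abv v (P.ratio v z) ≤ P.abv v (1 + P.ratio v z) := by
  have h := P.minAbv_le v z (P.minIdx v z + 2)
  rw [minAbv, hz.unitTriple_minIdx_add_two, hz.unitTriple_minIdx, (P.abv v).map_neg, map_mul,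
    map_mul] at h
  exact le_of_mul_le_mul_left h ((P.abv v).pos (hz.lead_ne_zero v))

theorem one_le_addConst_mul_abv_one_add (hz : P.IsUnitSol z) (v : ι) :
    1 ≤ P.addConst v * P.abv v (1 + P.ratio v z) := by
  have h := P.abv_sub_le v (1 + P.ratio v z) (P.ratio v z)
  rwa [add_sub_cancel_right, (P.abv v).map_one, max_eq_left (hz.abv_ratio_le_abv_one_add v)] at h

theorem prod_abv_unitTriple (hz : P.IsUnitSol z) (v : ι) :
    ∏ i, P.abv v (unitTriple z i) =
      P.abv v (P.lead v z) ^ 3 * (P.abv v (P.ratio v z) * P.abv v (1 + P.ratio v z)) := by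
  rw [← Equiv.prod_comp (Equiv.addLeft (P.minIdx v z)), Fin.prod_univ_three]
  simp only [Equiv.coe_addLeft, add_zero]
  rw [hz.unitTriple_minIdx_add_two, hz.unitTriple_minIdx, (P.abv v).map_neg, map_mul, map_mul,
    ← lead]
  ring

theorem abv_sub_eq (hz : P.IsUnitSol z) (hw : P.IsUnitSol w)
    (hidx : P.minIdx v z = P.minIdx v w) :
    P.abv v (z - w) =
      P.abv v (P.lead v z) * P.abv v (P.lead v w) * P.abv v (P.ratio v z - P.ratio v w) := by
  have hcyc := minor_eq_cyclic (sum_unitTriple z) (sum_unitTriple w) (P.minIdx v z)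
  have hlead : unitTriple w (P.minIdx v w + 1) = P.lead v w := rfl
  rw [minor_unitTriple, hz.unitTriple_minIdx, ← lead, hidx, hw.unitTriple_minIdx, hlead] at hcyc
  rw [← map_mul, ← map_mul, hcyc]
  congr 1
  ring

theorem abv_sub_pow_three_mul_le (hz : P.IsUnitSol z) (hw : P.IsUnitSol w)
    (hidx : P.minIdx v z = P.minIdx v w) :
    P.abv v (z - w) ^ 3 * (P.abv v (P.ratio v z) * P.abv v (P.ratio v w)) ≤
      P.addConst v ^ 2 * P.abv v (P.ratio v z - P.ratio v w) ^ 3 *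
        ((∏ i, P.abv v (unitTriple z i)) * ∏ i, P.abv v (unitTriple w i)) := by
  have hone := one_le_mul_of_one_le_of_one_le (hz.one_le_addConst_mul_abv_one_add v)
    (hw.one_le_addConst_mul_abv_one_add v)
  rw [hz.abv_sub_eq hw hidx, hz.prod_abv_unitTriple, hw.prod_abv_unitTriple]
  refine (le_mul_of_one_le_right (by positivity) hone).trans_eq ?_
  ring

theorem prod_abv_unitTriple_pos (hz : P.IsUnitSol z) (v : ι) :
    0 < ∏ i, P.abv v (unitTriple z i) :=
  Finset.prod_pos fun i _ => (P.abv v).pos (hz.unitTriple_ne_zero i)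

theorem sum_logAbv_unitTriple_add (hz : P.IsUnitSol z) (hw : P.IsUnitSol w) (v : ι) :
    ∑ i, P.logAbv v (unitTriple z i) + ∑ i, P.logAbv v (unitTriple w i) =
      P.weight v *
        Real.log ((∏ i, P.abv v (unitTriple z i)) * ∏ i, P.abv v (unitTriple w i)) := by
  rw [Real.log_mul (hz.prod_abv_unitTriple_pos v).ne' (hw.prod_abv_unitTriple_pos v).ne',
    Real.log_prod fun i _ => (P.abv v).ne_zero (hz.unitTriple_ne_zero i),
    Real.log_prod fun i _ => (P.abv v).ne_zero (hw.unitTriple_ne_zero i), mul_add,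
    Finset.mul_sum, Finset.mul_sum]
  rfl

theorem abv_sub_pow_three_le_of_notMem (hz : P.IsUnitSol z) (hw : P.IsUnitSol w) (hv : v ∉ P.arch)
    (hidx : P.minIdx v z = P.minIdx v w) (hexp : P.ratioExp v z = P.ratioExp v w) :
    P.abv v (z - w) ^ 3 ≤
      (∏ i, P.abv v (unitTriple z i)) * ∏ i, P.abv v (unitTriple w i) := by
  have hratio : P.abv v (P.ratio v z - P.ratio v w) ^ 3 ≤
      P.abv v (P.ratio v z) * P.abv v (P.ratio v w) := by
    have hsub := P.abv_sub_le v (P.ratio v z) (P.ratio v w)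
    rw [addConst, if_neg hv, one_mul] at hsub
    have hsq := sq_max_le_min_of_dyadicExp_eq (hz.abv_ratio_pos v) (hz.abv_ratio_le_one v)
      (hw.abv_ratio_pos v) (hw.abv_ratio_le_one v) (P.le_half_of_lt_one v hv _)
      (P.le_half_of_lt_one v hv _) hexp
    calc
      _ ≤ max (P.abv v (P.ratio v z)) (P.abv v (P.ratio v w)) ^ 3 := by gcongr
      _ = max (P.abv v (P.ratio v z)) (P.abv v (P.ratio v w)) *
          max (P.abv v (P.ratio v z)) (P.abv v (P.ratio v w)) ^ 2 := by ring
      _ ≤ max (P.abv v (P.ratio v z)) (P.abv v (P.ratio v w)) *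
          min (P.abv v (P.ratio v z)) (P.abv v (P.ratio v w)) := by gcongr
      _ = _ := max_mul_min _ _
  have hpos := mul_pos (hz.abv_ratio_pos v) (hw.abv_ratio_pos v)
  have hmul := hz.abv_sub_pow_three_mul_le hw hidx
  rw [addConst, if_neg hv, one_pow, one_mul] at hmul
  refine le_of_mul_le_mul_right (hmul.trans ?_) hpos
  rw [mul_comm]
  have := mul_pos (hz.prod_abv_unitTriple_pos v) (hw.prod_abv_unitTriple_pos v)
  gcongr

theorem abv_sub_pow_three_lt_of_mem (hz : P.IsUnitSol z) (hw : P.IsUnitSol w) (hv : v ∈ P.arch)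
    (hidx : P.minIdx v z = P.minIdx v w) (hexp : P.ratioExp v z = P.ratioExp v w)
    (hcell : P.ratioCell v z = P.ratioCell v w) :
    P.abv v (z - w) ^ 3 <
      (∏ i, P.abv v (unitTriple z i)) * ∏ i, P.abv v (unitTriple w i) := by
  have hratio : 2 ^ 2 * P.abv v (P.ratio v z - P.ratio v w) ^ 3 <
      P.abv v (P.ratio v z) * P.abv v (P.ratio v w) := by
    have hzle := hz.abv_ratio_le_one v
    have hwle := hw.abv_ratio_le_one v
    simp only [ratioCell, dif_pos hv] at hcell
    simp only [ratioExp] at hexp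
    have hσ := (P.exists_embedding v hv).choose_spec
    generalize (P.exists_embedding v hv).choose = σ at hσ hcell
    simp only [hσ] at hzle hwle hexp ⊢
    have hlt := norm_sub_pow_three_lt_of_complexCell_eq
      ((map_ne_zero _).mpr (hz.ratio_ne_zero v)) hzle
      ((map_ne_zero _).mpr (hw.ratio_ne_zero v)) hwle hexp hcell
    rw [map_sub]
    linarith
  have hpos := mul_pos (hz.abv_ratio_pos v) (hw.abv_ratio_pos v)
  have hmul := hz.abv_sub_pow_three_mul_le hw hidx
  rw [addConst, if_pos hv] at hmul
  refine lt_of_mul_lt_mul_right (hmul.trans_lt ?_) hpos.le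
  rw [mul_comm]
  have := mul_pos (hz.prod_abv_unitTriple_pos v) (hw.prod_abv_unitTriple_pos v)
  gcongr

theorem weight_mul_ratioExp_mul_log_two_le (hz : P.IsUnitSol z) (v : ι) :
    P.weight v * P.ratioExp v z * Real.log 2 ≤ P.spread v z := by
  have hlog := Real.log_le_log (hz.abv_ratio_pos v)
    (le_two_inv_pow_dyadicExp (hz.abv_ratio_pos v) (hz.abv_ratio_le_one v))
  have hlead := Real.log_le_log ((P.abv v).pos (hz.lead_ne_zero v))
    (P.le_maxAbv v z (P.minIdx v z + 1))
  have hratio : Real.log (P.abv v (P.ratio v z)) =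
      Real.log (P.minAbv v z) - Real.log (P.abv v (P.lead v z)) := by
    rw [ratio, map_div₀, Real.log_div ((P.abv v).ne_zero (hz.unitTriple_ne_zero _))
      ((P.abv v).ne_zero (hz.lead_ne_zero v)), minAbv]
  rw [hratio, Real.log_pow, Real.log_inv] at hlog
  rw [spread, logMax, logMin, ← mul_sub, mul_assoc, ratioExp]
  gcongr
  linarith

theorem sum_weight_mul_ratioExp_le (hz : P.IsUnitSol z) (hheight : P.height z < 4 * P.archLog) :
    ∑ v ∈ P.S, P.weight v * P.ratioExp v z ≤ 12 * ∑ v ∈ P.arch, P.weight v := by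
  have hexp := Finset.sum_le_sum fun v (_ : v ∈ P.S) => hz.weight_mul_ratioExp_mul_log_two_le v
  have hspread := hz.sum_spread_le
  rw [sum_spread] at hspread
  rw [archLog_eq] at hheight
  rw [← Finset.sum_mul, ← spreadIn] at hexp
  have hle : ∑ v ∈ P.S, (P.weight v : ℝ) * P.ratioExp v z ≤
      12 * ∑ v ∈ P.arch, (P.weight v : ℝ) := by
    refine le_of_mul_le_mul_right ?_ (Real.log_pos one_lt_two)
    linarith [hz.spreadOut_nonneg]
  exact_mod_cast hle

end IsUnitSol

variable (P) in
/-- The possible values of `minIdx`, `ratioExp` and `ratioCell` at `v` when `ratioExp` is less than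
`n`. -/
noncomputable def cellLabels (v : ι) (n : ℕ) : Finset (Fin 3 × (_ : ℕ) × (ℕ × ℕ)) :=
  Finset.univ ×ˢ (Finset.range n).sigma fun k =>
    if v ∈ P.arch then Finset.range (gridSize k) ×ˢ Finset.range (gridSize k) else {(0, 0)}

theorem IsUnitSol.ratioCell_mem (hz : P.IsUnitSol z) {n : ℕ} (hn : P.ratioExp v z < n) :
    (P.minIdx v z, ⟨P.ratioExp v z, P.ratioCell v z⟩) ∈ P.cellLabels v n := by
  refine Finset.mk_mem_product (Finset.mem_univ _)
    (Finset.mem_sigma.mpr ⟨Finset.mem_range.mpr hn, ?_⟩)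
  unfold ratioCell
  split_ifs with hv
  · have hle := hz.abv_ratio_le_one v
    rw [ratioExp]
    have hσ := (P.exists_embedding v hv).choose_spec
    generalize (P.exists_embedding v hv).choose = σ at hσ
    rw [hσ] at hle ⊢
    exact complexCell_mem ((map_ne_zero _).mpr (hz.ratio_ne_zero v)) hle
  · exact Finset.mem_singleton_self _

variable (P) in
theorem sum_cellLabels (v : ι) (n : ℕ) (q : ℝ) :
    ∑ l ∈ P.cellLabels v n, q ^ l.2.1 =
      3 * ∑ k ∈ Finset.range n, (if v ∈ P.arch then (gridSize k : ℝ) ^ 2 else 1) * q ^ k := by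
  simp only [cellLabels, Finset.sum_product, Finset.sum_sigma, Finset.sum_const, Finset.card_univ,
    Fintype.card_fin, nsmul_eq_mul, Nat.cast_ofNat]
  congr! 3
  split_ifs <;> simp [sq]

variable (P) in
theorem sum_cellLabels_le (v : ι) (n : ℕ) :
    ∑ l ∈ P.cellLabels v n, (24 / 25 : ℝ) ^ (P.weight v * l.2.1) ≤
      2000 * if v ∈ P.arch then (24 / 25) ^ (12 * P.weight v) else 1 := by
  simp only [pow_mul]
  rw [P.sum_cellLabels]
  split_ifs with hv
  · rcases P.weight_of_mem v hv with h | h <;>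
    · rw [h]
      grw [sum_gridSize_sq_mul_pow_le (by norm_num) (by norm_num)]
      norm_num [Finset.sum_range_succ, gridSize]
  · rw [P.weight_of_notMem v hv]
    simp only [one_mul]
    grw [sum_range_pow_le_inv_one_sub (by norm_num) (by norm_num)]
    norm_num

variable (P) in
theorem prod_sum_cellLabels_le (n : ℕ) :
    ∏ v : P.S, ∑ l ∈ P.cellLabels v n, (24 / 25 : ℝ) ^ (P.weight v * l.2.1) ≤
      2000 ^ P.S.card * (24 / 25) ^ (12 * ∑ v ∈ P.arch, P.weight v) := by
  refine (Finset.prod_le_prod (fun _ _ => by positivity)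
    fun (v : P.S) _ => P.sum_cellLabels_le v.1 n).trans_eq ?_
  rw [Finset.prod_mul_distrib, Finset.prod_const, Finset.card_univ, Fintype.card_coe,
    Finset.prod_coe_sort P.S fun v => if v ∈ P.arch then (24 / 25 : ℝ) ^ (12 * P.weight v) else 1,
    Finset.prod_ite_mem, Finset.inter_eq_right.mpr P.arch_subset, Finset.prod_pow_eq_pow_sum,
    Finset.mul_sum]

variable {Z : Finset K}

namespace IsUnitFamily

variable (hZ : P.IsUnitFamily Z)
include hZ

theorem ratioExp_eq (hz : z ∈ Z) (hw : w ∈ Z) (hv : v ∉ P.S) :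
    P.ratioExp v z = P.ratioExp v w := by
  simp only [ratioExp, ratio, lead, map_div₀, hZ.minIdx_eq hv hz hw,
    hZ.abv_unitTriple_eq hv hz hw]

theorem eq_of_ratioCell_eq (hz : z ∈ Z) (hw : w ∈ Z)
    (hidx : ∀ v ∈ P.S, P.minIdx v z = P.minIdx v w)
    (hexp : ∀ v ∈ P.S, P.ratioExp v z = P.ratioExp v w)
    (hcell : ∀ v ∈ P.S, P.ratioCell v z = P.ratioCell v w) : z = w := by
  by_contra hne
  have hsz := hZ.isUnitSol z hz
  have hsw := hZ.isUnitSol w hw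
  have hsub := sub_ne_zero.mpr hne
  have hidx' (v) : P.minIdx v z = P.minIdx v w := by
    by_cases hv : v ∈ P.S
    exacts [hidx v hv, hZ.minIdx_eq hv hz hw]
  have hexp' (v) : P.ratioExp v z = P.ratioExp v w := by
    by_cases hv : v ∈ P.S
    exacts [hexp v hv, hZ.ratioExp_eq hz hw hv]
  have hpos (v) : 0 < P.abv v (z - w) ^ 3 := pow_pos ((P.abv v).pos hsub) 3
  have hlt (v) (hv : v ∈ P.arch) : 3 * P.logAbv v (z - w) <
      ∑ i, P.logAbv v (unitTriple z i) + ∑ i, P.logAbv v (unitTriple w i) := by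
    rw [three_mul_logAbv, hsz.sum_logAbv_unitTriple_add hsw]
    refine mul_lt_mul_of_pos_left (Real.log_lt_log (hpos v) ?_)
      (by exact_mod_cast P.one_le_weight v)
    exact hsz.abv_sub_pow_three_lt_of_mem hsw hv (hidx' v) (hexp' v)
      (hcell v (P.arch_subset hv))
  have hle (v) : 3 * P.logAbv v (z - w) ≤
      ∑ i, P.logAbv v (unitTriple z i) + ∑ i, P.logAbv v (unitTriple w i) := by
    by_cases hv : v ∈ P.arch
    · exact (hlt v hv).le
    rw [three_mul_logAbv, hsz.sum_logAbv_unitTriple_add hsw]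
    exact mul_le_mul_of_nonneg_left (Real.log_le_log (hpos v)
      (hsz.abv_sub_pow_three_le_of_notMem hsw hv (hidx' v) (hexp' v))) (Nat.cast_nonneg _)
  obtain ⟨v₀, hv₀⟩ := P.arch_nonempty
  have hsum := Finset.sum_lt_sum (fun v _ => hle v) ⟨v₀, Finset.mem_univ _, hlt v₀ hv₀⟩
  rw [← Finset.mul_sum, Finset.sum_add_distrib, hsz.sum_sum_logAbv_eq_zero,
    hsw.sum_sum_logAbv_eq_zero] at hsum
  linarith [sum_logAbv_nonneg (sub_mem hsz.mem hsw.mem) hsub]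

theorem card_small_le :
    ((Z.filter fun z => P.height z < 4 * P.archLog).card : ℝ) ≤ 2000 ^ P.S.card := by
  set Z' := Z.filter fun z => P.height z < 4 * P.archLog
  set n := 12 * ∑ v ∈ P.arch, P.weight v
  let key (z : K) (v : P.S) : Fin 3 × (_ : ℕ) × (ℕ × ℕ) :=
    (P.minIdx v z, ⟨P.ratioExp v z, P.ratioCell v z⟩)
  have hZ' (z) (hz : z ∈ Z') : P.IsUnitSol z := hZ.isUnitSol z (Finset.mem_filter.mp hz).1
  have hkeySum (z) (hz : z ∈ Z') : ∑ v : P.S, P.weight v * (key z v).2.1 ≤ n := by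
    rw [Finset.sum_coe_sort P.S fun v => P.weight v * P.ratioExp v z]
    exact (hZ' z hz).sum_weight_mul_ratioExp_le (Finset.mem_filter.mp hz).2
  have hfiber (C) (hC : C ⊆ Z') (hkey : ∀ z ∈ C, ∀ w ∈ C, key z = key w) : C.card ≤ 1 := by
    refine Finset.card_le_one.mpr fun z hz w hw => ?_
    have heq (v) (hv : v ∈ P.S) := congrFun (hkey z hz w hw) ⟨v, hv⟩
    simp only [key, Prod.mk.injEq, Sigma.mk.injEq, heq_eq_eq] at heq
    exact hZ.eq_of_ratioCell_eq (Finset.mem_filter.mp (hC hz)).1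
      (Finset.mem_filter.mp (hC hw)).1 (fun v hv => (heq v hv).1) (fun v hv => (heq v hv).2.1)
      fun v hv => (heq v hv).2.2
  have hcount := card_mul_le_of_fiber_card_le (Z := Z') (key := key)
    (labels := fun v => P.cellLabels v (n + 1))
    (weight := fun v l => (24 / 25 : ℝ) ^ (P.weight v * l.2.1)) (c := (24 / 25) ^ n)
    (fun z hz v => ?_) (fun _ _ => by positivity) (fun z hz => ?_) hfiber
  · rw [Nat.cast_one, one_mul] at hcount
    exact le_of_mul_le_mul_right (hcount.trans (P.prod_sum_cellLabels_le (n + 1)))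
      (by positivity)
  · refine (hZ' z hz).ratioCell_mem (Nat.lt_succ_of_le ?_)
    calc
      P.ratioExp v z ≤ P.weight v * P.ratioExp v z :=
        Nat.le_mul_of_pos_left _ (P.one_le_weight v)
      _ ≤ ∑ v : P.S, P.weight v * (key z v).2.1 :=
        Finset.single_le_sum (f := fun v : P.S => P.weight v * (key z v).2.1)
          (fun _ _ => Nat.zero_le _) (Finset.mem_univ v)
      _ ≤ n := hkeySum z hz
  · rw [Finset.prod_pow_eq_pow_sum]
    exact pow_le_pow_of_le_one (by norm_num) (by norm_num) (hkeySum z hz)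

theorem card_le [CharZero K] : Z.card ≤ 3 * 7 ^ (4 * P.S.card) := by
  have hS : P.S.card ≠ 0 := (P.arch_nonempty.mono P.arch_subset).card_pos.ne'
  have hpow : (412 : ℝ) ^ P.S.card ≤ 412 / 2401 * 2401 ^ P.S.card := by
    have hle := pow_le_of_le_one (by norm_num) (by norm_num : (412 / 2401 : ℝ) ≤ 1) hS
    rwa [div_pow, div_le_iff₀ (by positivity)] at hle
  have hcard : (Z.card : ℝ) ≤ 3 * 7 ^ (4 * P.S.card) := by
    rw [← Finset.card_filter_add_card_filter_not (fun z => P.height z < 4 * P.archLog)]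
    simp only [not_lt]
    push_cast
    grw [hZ.card_small_le, hZ.card_large_le, hpow]
    grw [(by norm_num : (2000 : ℝ) ≤ 2401)]
    rw [pow_mul, (by norm_num : (7 : ℝ) ^ 4 = 2401)]
    linarith [(by positivity : (0 : ℝ) ≤ 2401 ^ P.S.card)]
  exact_mod_cast hcard

end IsUnitFamily

end PlaceSystem

/-! ### The unit equation in a number field -/

section NumberFieldPlaces

open NumberField.HeightOneSpectrum

variable {K : Type*} [Field K] [NumberField K]

theorem adicAbv_le_one_iff {v : HeightOneSpectrum (𝓞 K)} {x : K} :
    adicAbv K v x ≤ 1 ↔ v.valuation K x ≤ 1 := by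
  rw [adicAbv_def, NNReal.coe_le_one,
    WithZeroMulInt.toNNReal_le_one_iff (one_lt_absNorm_nnreal v)]

theorem adicAbv_eq_one_iff {v : HeightOneSpectrum (𝓞 K)} {x : K} :
    adicAbv K v x = 1 ↔ v.valuation K x = 1 := by
  rw [adicAbv_def, NNReal.coe_eq_one,
    WithZeroMulInt.toNNReal_eq_one_iff _ (absNorm_ne_zero v) (one_lt_absNorm_nnreal v).ne']

theorem adicAbv_le_half_of_lt_one {v : HeightOneSpectrum (𝓞 K)} {x : K}
    (h : adicAbv K v x < 1) : adicAbv K v x ≤ 1 / 2 := by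
  rcases eq_or_ne x 0 with rfl | hx
  · rw [map_zero]
    norm_num
  have hv : v.valuation K x ≠ 0 := (Valuation.ne_zero_iff _).mpr hx
  have hnorm : (2 : ℝ) ≤ Ideal.absNorm v.asIdeal := mod_cast one_lt_absNorm v
  rw [adicAbv_def, WithZeroMulInt.toNNReal_neg_apply _ hv] at h ⊢
  push_cast at h ⊢
  have hneg : (WithZero.unzero hv).toAdd < 0 := by
    contrapose! h
    exact one_le_zpow₀ (by linarith) h
  calc (Ideal.absNorm v.asIdeal : ℝ) ^ (WithZero.unzero hv).toAdd
      ≤ (Ideal.absNorm v.asIdeal : ℝ) ^ (-1 : ℤ) :=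
        zpow_le_zpow_right₀ (by linarith) (Int.le_sub_one_of_lt hneg)
    _ ≤ 1 / 2 := by
        rw [zpow_neg_one, one_div]
        exact inv_anti₀ two_pos hnorm

theorem finite_adicAbv_ne_one {x : K} (hx : x ≠ 0) :
    {v : HeightOneSpectrum (𝓞 K) | adicAbv K v x ≠ 1}.Finite := by
  refine ((FinitePlace.hasFiniteMulSupport hx).preimage
    FinitePlace.equivHeightOneSpectrum.symm.injective.injOn).subset fun v hv => ?_
  rwa [Set.mem_preimage, Function.mem_mulSupport, FinitePlace.equivHeightOneSpectrum_symm_apply,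
    FinitePlace.norm_embedding]

theorem prod_infinitePlace_mul_finprod_adicAbv {x : K} (hx : x ≠ 0) :
    (∏ w : InfinitePlace K, w x ^ w.mult) * ∏ᶠ v : HeightOneSpectrum (𝓞 K), adicAbv K v x = 1 := by
  rw [← prod_abs_eq_one hx, ← finprod_comp_equiv FinitePlace.equivHeightOneSpectrum.symm]
  simp only [FinitePlace.equivHeightOneSpectrum_symm_apply, FinitePlace.norm_embedding]

theorem one_le_prod_infinitePlace_mul_prod_adicAbv {U : Finset (HeightOneSpectrum (𝓞 K))} {x : K}
    (hx : x ≠ 0) (hxU : ∀ v ∉ U, adicAbv K v x ≤ 1) :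
    1 ≤ (∏ w : InfinitePlace K, w x ^ w.mult) * ∏ v ∈ U, adicAbv K v x := by
  have hsupp : (fun v => adicAbv K v x).mulSupport ⊆ ↑(U ∪ (finite_adicAbv_ne_one hx).toFinset) :=
    fun v hv => Finset.mem_union_right _ ((finite_adicAbv_ne_one hx).mem_toFinset.mpr hv)
  rw [← prod_infinitePlace_mul_finprod_adicAbv hx, finprod_eq_prod_of_mulSupport_subset _ hsupp,
    ← Finset.prod_sdiff Finset.subset_union_left]
  refine mul_le_mul_of_nonneg_left (mul_le_of_le_one_left
    (Finset.prod_nonneg fun v _ => apply_nonneg _ x) ?_)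
    (Finset.prod_nonneg fun w _ => pow_nonneg (apply_nonneg w x) _)
  exact Finset.prod_le_one (fun v _ => apply_nonneg _ x)
    fun v hv => hxU v (Finset.mem_sdiff.mp hv).2

/-- The place system of a number field made of all archimedean places and the finite set `U` of
primes. Its distinguished set consists of the archimedean places and `T`; the larger `U` is there
because the solutions of the unit equation that we count are only `U`-units. -/
noncomputable def numberFieldPlaceSystem (T U : Finset (HeightOneSpectrum (𝓞 K))) :
    PlaceSystem K (InfinitePlace K ⊕ U) where
  abv := Sum.elim (fun w => w.1) (fun v => adicAbv K v.1)
  weight := Sum.elim InfinitePlace.mult (fun _ => 1)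
  S := Finset.univ.disjSum (Finset.univ.filter fun v : U => v.1 ∈ T)
  arch := Finset.univ.disjSum ∅
  integers := ((U : Set (HeightOneSpectrum (𝓞 K))).integer K).toSubring
  arch_subset := Finset.disjSum_mono le_rfl (Finset.empty_subset _)
  arch_nonempty := ⟨Sum.inl (Classical.arbitrary _), by simp⟩
  weight_of_mem := by
    rintro (w | v) h
    · simp only [Sum.elim_inl, InfinitePlace.mult]
      split_ifs <;> simp
    · simp at h
  weight_of_notMem := by
    rintro (w | v) h
    · simp at h
    · rfl
  exists_embedding := by
    rintro (w | v) h
    · exact ⟨w.embedding, fun x => (w.norm_embedding_eq x).symm⟩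
    · simp at h
  add_le_max := by
    rintro (w | v) h x y
    · simp at h
    · exact adicAbv_add_le_max K v.1 x y
  le_half_of_lt_one := by
    rintro (w | v) h x hx
    · simp at h
    · exact adicAbv_le_half_of_lt_one hx
  one_le_prod := by
    intro x hx hx0
    simp only [Fintype.prod_sum_type, Sum.elim_inl, Sum.elim_inr, pow_one]
    rw [Finset.prod_coe_sort U (fun v => adicAbv K v x)]
    exact one_le_prod_infinitePlace_mul_prod_adicAbv hx0
      fun v hv => adicAbv_le_one_iff.mpr (hx v hv)

theorem card_numberFieldPlaceSystem_S {T U : Finset (HeightOneSpectrum (𝓞 K))} (hTU : T ⊆ U) :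
    (numberFieldPlaceSystem T U).S.card = sCard K T := by
  have hT : (Finset.univ.filter fun v : U => v.1 ∈ T).card = T.card := by
    rw [Finset.card_filter, Finset.sum_coe_sort U fun v => if v ∈ T then 1 else 0,
      ← Finset.card_filter, Finset.filter_mem_eq_inter, Finset.inter_eq_right.mpr hTU]
  rw [numberFieldPlaceSystem, Finset.card_disjSum, hT, Finset.card_univ, sCard, add_comm]

theorem card_le_of_valuation_eq (T : Finset (HeightOneSpectrum (𝓞 K))) (Z : Finset K)
    (h0 : ∀ z ∈ Z, z ≠ 0) (h1 : ∀ z ∈ Z, z ≠ 1)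
    (hval : ∀ v ∉ T, ∀ z ∈ Z, ∀ w ∈ Z, v.valuation K z = v.valuation K w)
    (hval_one_sub : ∀ v ∉ T, ∀ z ∈ Z, ∀ w ∈ Z, v.valuation K (1 - z) = v.valuation K (1 - w)) :
    Z.card ≤ 3 * 7 ^ (4 * sCard K T) := by
  have hfin : (⋃ z ∈ Z, ({v : HeightOneSpectrum (𝓞 K) | adicAbv K v z ≠ 1} ∪
      {v | adicAbv K v (1 - z) ≠ 1})).Finite :=
    Z.finite_toSet.biUnion fun z hz => (finite_adicAbv_ne_one (h0 z hz)).union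
      (finite_adicAbv_ne_one (sub_ne_zero.mpr (h1 z hz).symm))
  set U := T ∪ hfin.toFinset with hU
  have hunit : ∀ z ∈ Z, ∀ v ∉ U, v.valuation K z = 1 ∧ v.valuation K (1 - z) = 1 := by
    intro z hz v hv
    simp only [hU, Finset.mem_union, Set.Finite.mem_toFinset, Set.mem_iUnion, Set.mem_union,
      Set.mem_ofPred_eq, not_or, not_exists, not_not] at hv
    exact ⟨adicAbv_eq_one_iff.mp (hv.2 z hz).1, adicAbv_eq_one_iff.mp (hv.2 z hz).2⟩
  have hZ : (numberFieldPlaceSystem T U).IsUnitFamily Z := by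
    refine ⟨fun z hz => ⟨h0 z hz, h1 z hz, fun v hv => (hunit z hz v hv).1.le, fun v hv => ?_,
      fun v hv => ?_⟩, ?_, ?_⟩
    · rw [map_inv₀, (hunit z hz v hv).1, inv_one]
    · rw [map_inv₀, (hunit z hz v hv).2, inv_one]
    all_goals
      rintro (w | v) hv z hz z' hz'
      · simp [numberFieldPlaceSystem] at hv
      have hvT : v.1 ∉ T := by simpa [numberFieldPlaceSystem] using hv
      simp only [numberFieldPlaceSystem, Sum.elim_inr, adicAbv_def]
    · rw [hval v.1 hvT z hz z' hz']
    · rw [hval_one_sub v.1 hvT z hz z' hz']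
  exact card_numberFieldPlaceSystem_S (Finset.subset_union_left : T ⊆ U) ▸ hZ.card_le

end NumberFieldPlaces

/-! ### Lifts of endomorphisms of the projective line -/

section PlaneMap

variable {A : Type*} [CommRing A] {F G : MvPolynomial (Fin 2) A} {d : ℕ}

theorem minor_dvd_monomial_sub (p q : Fin 2 → A) {i j k l : ℕ} (h : i + j = k + l) :
    minor p q ∣
      p 0 ^ i * p 1 ^ j * (q 0 ^ k * q 1 ^ l) - q 0 ^ i * q 1 ^ j * (p 0 ^ k * p 1 ^ l) := by
  rcases le_total k i with hk | hk
  · obtain ⟨n, rfl⟩ := Nat.exists_eq_add_of_le hk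
    obtain rfl : l = j + n := by omega
    refine ((sub_dvd_pow_sub_pow (p 0 * q 1) (p 1 * q 0) n).mul_left
      (p 0 ^ k * q 0 ^ k * p 1 ^ j * q 1 ^ j)).trans (dvd_of_eq ?_)
    ring
  · obtain ⟨n, rfl⟩ := Nat.exists_eq_add_of_le hk
    obtain rfl : j = l + n := by omega
    refine ((sub_dvd_pow_sub_pow (p 0 * q 1) (p 1 * q 0) n).mul_left
      (-(p 0 ^ i * q 0 ^ i * p 1 ^ l * q 1 ^ l))).trans (dvd_of_eq ?_)
    ring

theorem add_eq_of_mem_support (hF : F.IsHomogeneous d) {m : Fin 2 →₀ ℕ} (hm : m ∈ F.support) :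
    m 0 + m 1 = d := by
  rw [← Fin.sum_univ_two, ← Finsupp.degree_eq_sum, Finsupp.degree_eq_weight_one]
  exact hF (mem_support_iff.mp hm)

theorem minor_dvd_aeval_sub {R : Type*} [CommRing R] [Algebra A R] (hF : F.IsHomogeneous d)
    (hG : G.IsHomogeneous d) (p q : Fin 2 → R) :
    minor p q ∣ aeval p F * aeval q G - aeval q F * aeval p G := by
  simp only [aeval_def, eval₂_eq', Finset.sum_mul_sum, Fin.prod_univ_two]
  rw [← Finset.sum_sub_distrib]
  refine Finset.dvd_sum fun m hm => ?_
  rw [← Finset.sum_sub_distrib]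
  refine Finset.dvd_sum fun m' hm' => ?_
  have hdeg : m 0 + m 1 = m' 0 + m' 1 :=
    (add_eq_of_mem_support hF hm).trans (add_eq_of_mem_support hG hm').symm
  convert (minor_dvd_monomial_sub p q hdeg).mul_left
    (algebraMap A R (F.coeff m) * algebraMap A R (G.coeff m')) using 1
  ring

theorem eval_smul_of_isHomogeneous (hF : F.IsHomogeneous d) (u : A) (p : Fin 2 → A) :
    eval (u • p) F = u ^ d * eval p F := by
  rw [eval_eq', eval_eq', Finset.mul_sum]
  refine Finset.sum_congr rfl fun m hm => ?_
  simp only [← add_eq_of_mem_support hF hm, Fin.prod_univ_two, Pi.smul_apply, smul_eq_mul]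
  ring

/-- The lift `(x, y) ↦ (F(x, y), G(x, y))` to the affine plane of the map `[F : G]` of the
projective line. -/
noncomputable def planeMap (F G : MvPolynomial (Fin 2) A) (p : Fin 2 → A) : Fin 2 → A :=
  ![eval p F, eval p G]

theorem semiconj_planeMap_map {B : Type*} [CommRing B] (f : A →+* B) :
    Function.Semiconj (f ∘ ·) (planeMap F G) (planeMap (map f F) (map f G)) := by
  intro p
  ext i
  fin_cases i <;> simp [planeMap, eval_map, eval₂_comp, Function.comp_def]

theorem comp_planeMap_iterate_congr {B : Type*} [CommRing B] {f : A →+* B} {p q : Fin 2 → A}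
    (h : f ∘ p = f ∘ q) (n : ℕ) :
    f ∘ (planeMap F G)^[n] p = f ∘ (planeMap F G)^[n] q := by
  rw [((semiconj_planeMap_map f).iterate_right n).eq, h,
    ((semiconj_planeMap_map f).iterate_right n).eq]

/-- `E` is the form in two pairs of variables such that
`F(p) G(q) - F(q) G(p) = (p₀q₁ - p₁q₀) E(p, q)`: the derivative of `[F : G]` on the diagonal, and a
difference quotient off it. -/
def IsMinorQuotient (F G : MvPolynomial (Fin 2) A) (E : MvPolynomial (Fin 2 ⊕ Fin 2) A) : Prop :=
  rename Sum.inl F * rename Sum.inr G - rename Sum.inr F * rename Sum.inl G =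
    minor (X ∘ Sum.inl) (X ∘ Sum.inr) * E

theorem exists_isMinorQuotient (hF : F.IsHomogeneous d) (hG : G.IsHomogeneous d) :
    ∃ E, IsMinorQuotient F G E := by
  simp only [IsMinorQuotient, rename_eq_aeval]
  exact minor_dvd_aeval_sub hF hG _ _

namespace IsMinorQuotient

variable {E : MvPolynomial (Fin 2 ⊕ Fin 2) A} (hE : IsMinorQuotient F G E)
include hE

theorem eval₂_eq {R : Type*} [CommRing R] (f : A →+* R) (p q : Fin 2 → R) :
    eval₂ f p F * eval₂ f q G - eval₂ f q F * eval₂ f p G =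
      minor p q * eval₂ f (Sum.elim p q) E := by
  have h := congrArg (eval₂Hom f (Sum.elim p q)) hE
  simpa only [minor, Function.comp_apply, map_sub, map_mul, coe_eval₂Hom, eval₂_X, eval₂_rename,
    Sum.elim_inl, Sum.elim_inr, Sum.elim_comp_inl, Sum.elim_comp_inr] using h

theorem minor_planeMap (p q : Fin 2 → A) :
    minor (planeMap F G p) (planeMap F G q) = minor p q * eval (Sum.elim p q) E := by
  have h := hE.eval₂_eq (RingHom.id A) p q
  simp only [eval₂_id] at h
  rw [← h, minor]
  simp only [planeMap, Matrix.cons_val_zero, Matrix.cons_val_one]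
  ring

theorem map {B : Type*} [CommRing B] (f : A →+* B) :
    IsMinorQuotient (MvPolynomial.map f F) (MvPolynomial.map f G) (MvPolynomial.map f E) := by
  have h := congrArg (MvPolynomial.map f) hE
  simpa only [IsMinorQuotient, minor, Function.comp_apply, map_sub, map_mul, map_rename,
    map_X] using h

theorem eval_diag_eq_zero [IsDomain A] {r : Fin 2 → A} (hr : r ≠ 0)
    (hdvd : (C (r 1) * X 0 - C (r 0) * X 1) ^ 2 ∣ C (eval r G) * F - C (eval r F) * G) :
    eval (Sum.elim r r) E = 0 := by
  set L : MvPolynomial (Fin 2) A := C (r 1) * X 0 - C (r 0) * X 1 with hL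
  have hL0 : L ≠ 0 := by
    refine fun h => hr (funext fun i => ?_)
    fin_cases i
    · simpa [hL] using congrArg (eval ![0, 1]) h
    · simpa [hL] using congrArg (eval ![1, 0]) h
  have hquot : C (eval r G) * F - C (eval r F) * G = L * eval₂ C (Sum.elim X (C ∘ r)) E := by
    have h := hE.eval₂_eq C X (C ∘ r)
    rw [eval₂_eta, eval₂_eta, ← eval₂_comp, ← eval₂_comp, minor] at h
    simp only [Function.comp_apply] at h
    linear_combination h
  rw [hquot, sq] at hdvd
  obtain ⟨M, hM⟩ := (mul_dvd_mul_iff_left hL0).mp hdvd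
  have hdiag := congrArg (eval r) hM
  have hLr : eval r L = 0 := by
    simp only [hL, map_sub, map_mul, eval_C, eval_X, mul_comm, sub_self]
  rw [map_mul, hLr, zero_mul, hom_eval₂] at hdiag
  convert hdiag
  · rw [eval, coe_eval₂Hom]
    congr 1
    · ext a
      simp
    · ext (i | i) <;> simp

end IsMinorQuotient

/-- The quotient of `minor (Φⁿ p) (Φⁿ q)` by `minor p q` for `Φ = planeMap F G`, where `E` is the
minor quotient of `F`, `G`: the chain rule for the difference quotients of the iterates. -/
noncomputable def iterateQuotient (F G : MvPolynomial (Fin 2) A)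
    (E : MvPolynomial (Fin 2 ⊕ Fin 2) A) (n : ℕ) (p q : Fin 2 → A) : A :=
  ∏ k ∈ Finset.range n, eval (Sum.elim ((planeMap F G)^[k] p) ((planeMap F G)^[k] q)) E

theorem minor_planeMap_iterate {E : MvPolynomial (Fin 2 ⊕ Fin 2) A} (hE : IsMinorQuotient F G E)
    (n : ℕ) (p q : Fin 2 → A) :
    minor ((planeMap F G)^[n] p) ((planeMap F G)^[n] q) =
      minor p q * iterateQuotient F G E n p q := by
  induction n with
  | zero => simp [iterateQuotient]
  | succ n ih =>
    rw [Function.iterate_succ_apply', Function.iterate_succ_apply', hE.minor_planeMap, ih,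
      iterateQuotient, iterateQuotient, Finset.prod_range_succ, mul_assoc]

theorem map_iterateQuotient_congr {B : Type*} [CommRing B] {f : A →+* B} {p q p' q' : Fin 2 → A}
    (hp : f ∘ p = f ∘ p') (hq : f ∘ q = f ∘ q') (E : MvPolynomial (Fin 2 ⊕ Fin 2) A) (n : ℕ) :
    f (iterateQuotient F G E n p q) = f (iterateQuotient F G E n p' q') := by
  simp only [iterateQuotient, map_prod, eval₂_comp, Sum.comp_elim]
  refine Finset.prod_congr rfl fun k _ => ?_
  rw [comp_planeMap_iterate_congr hp, comp_planeMap_iterate_congr hq]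

theorem isUnit_iterateQuotient_of_iterate_eq_smul [IsDomain A]
    {E : MvPolynomial (Fin 2 ⊕ Fin 2) A} (hE : IsMinorQuotient F G E) {n : ℕ} {p q : Fin 2 → A}
    {u w : A} (hu : IsUnit u) (hw : IsUnit w) (hp : (planeMap F G)^[n] p = u • p)
    (hq : (planeMap F G)^[n] q = w • q) (hpq : minor p q ≠ 0) :
    IsUnit (iterateQuotient F G E n p q) := by
  have h := minor_planeMap_iterate hE n p q
  rw [hp, hq, minor_smul_smul, mul_comm] at h
  rw [← mul_left_cancel₀ hpq h]
  exact hu.mul hw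

end PlaneMap

/-! ### Good reduction and primitive coordinates -/

section HasUnitCoord

variable {A : Type*} [CommRing A] {p q r : Fin 2 → A}

/-- Some coordinate of `p` is a unit. Over a local ring these are the primitive homogeneous
coordinates, those that can be reduced modulo the maximal ideal. -/
def HasUnitCoord (p : Fin 2 → A) : Prop := ∃ i, IsUnit (p i)

theorem HasUnitCoord.smul {u : A} (hu : IsUnit u) (hp : HasUnitCoord p) : HasUnitCoord (u • p) :=
  hp.imp fun _ hi => hu.mul hi

theorem HasUnitCoord.isUnit_of_smul {a : A} (h : HasUnitCoord (a • p)) : IsUnit a :=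
  h.elim fun _ hi => isUnit_of_mul_isUnit_left hi

theorem HasUnitCoord.exists_eq_smul (hq : HasUnitCoord q) (h : minor p q = 0) :
    ∃ a : A, p = a • q := by
  obtain ⟨i, u, hu⟩ := hq
  refine ⟨p i * ↑u⁻¹, funext fun j => ?_⟩
  have hcross : p i * q j = p j * q i := by
    rw [minor, sub_eq_zero] at h
    fin_cases i <;> fin_cases j
    exacts [rfl, h, h.symm, rfl]
  rw [Pi.smul_apply, smul_eq_mul, mul_right_comm, hcross, ← hu, Units.mul_inv_cancel_right]

theorem hasUnitCoord_comp_iff {B : Type*} [CommRing B] (f : A →+* B) [IsLocalHom f] :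
    HasUnitCoord (f ∘ p) ↔ HasUnitCoord p :=
  exists_congr fun i => isUnit_map_iff f (p i)

theorem hasUnitCoord_iff_ne_zero {k : Type*} [Field k] {x : Fin 2 → k} :
    HasUnitCoord x ↔ x ≠ 0 := by
  simp only [HasUnitCoord, isUnit_iff_ne_zero, Function.ne_iff, Pi.zero_apply]

theorem map_minor {B : Type*} [CommRing B] (f : A →+* B) (p q : Fin 2 → A) :
    f (minor p q) = minor (f ∘ p) (f ∘ q) := by
  simp only [minor, map_sub, map_mul, Function.comp_apply]

theorem ringHom_comp_smul {B : Type*} [CommRing B] (f : A →+* B) (a : A) (p : Fin 2 → A) :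
    f ∘ (a • p) = f a • (f ∘ p) :=
  funext fun i => map_mul f a (p i)

section IsLocalRing

open IsLocalRing

variable [IsLocalRing A]

theorem exists_isUnit_residue_comp_smul_eq (hp : HasUnitCoord p) (hr : HasUnitCoord r)
    (h : ¬ IsUnit (minor p r)) : ∃ t : A, IsUnit t ∧ residue A ∘ (t • r) = residue A ∘ p := by
  have hzero : minor (residue A ∘ p) (residue A ∘ r) = 0 := by
    rw [← map_minor]
    by_contra hne
    exact h ((residue_ne_zero_iff_isUnit _).mp hne)
  obtain ⟨a, ha⟩ := ((hasUnitCoord_comp_iff (residue A)).mpr hr).exists_eq_smul hzero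
  obtain ⟨t, rfl⟩ := residue_surjective a
  rw [← ringHom_comp_smul] at ha
  refine ⟨t, ?_, ha.symm⟩
  rw [← hasUnitCoord_comp_iff (residue A), ha, hasUnitCoord_comp_iff] at hp
  exact hp.isUnit_of_smul

theorem isUnit_iff_of_residue_eq {x y : A} (h : residue A x = residue A y) :
    IsUnit x ↔ IsUnit y := by
  rw [← isUnit_map_iff (residue A), h, isUnit_map_iff]

theorem minor_eq_zero_and_isUnit_iterateQuotient [IsDomain A] {F G : MvPolynomial (Fin 2) A}
    {E : MvPolynomial (Fin 2 ⊕ Fin 2) A} (hE : IsMinorQuotient F G E) {n : ℕ} {u w : A}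
    (hu : IsUnit u) (hw : IsUnit w) (hp : (planeMap F G)^[n] p = u • p)
    (hr : (planeMap F G)^[n] r = u • q) (hq : (planeMap F G)^[n] q = w • q)
    (hrp : residue A ∘ r = residue A ∘ p) (hqp : residue A ∘ q = residue A ∘ p)
    (hpq : minor p q ≠ 0) :
    minor r q = 0 ∧ IsUnit (iterateQuotient F G E n r r) := by
  have hunit := isUnit_iterateQuotient_of_iterate_eq_smul hE hu hw hp hq hpq
  have hunit_rq : IsUnit (iterateQuotient F G E n r q) :=
    (isUnit_iff_of_residue_eq (map_iterateQuotient_congr hrp rfl E n)).mpr hunit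
  refine ⟨?_, (isUnit_iff_of_residue_eq
    (map_iterateQuotient_congr hrp (hrp.trans hqp.symm) E n)).mpr hunit⟩
  have hmul := minor_planeMap_iterate hE n r q
  rw [hr, hq, minor_smul_smul, minor_self, mul_zero] at hmul
  exact (mul_eq_zero.mp hmul.symm).resolve_right hunit_rq.ne_zero

end IsLocalRing

end HasUnitCoord

section IntegralRep

variable {K : Type*} [Field K] {A : ValuationSubring K} {p q : Fin 2 → A} {P Q : P1 K}

theorem minor_rep_eq_zero_iff : minor P.rep Q.rep = 0 ↔ P = Q := by
  rw [← P.mk_rep, ← Q.mk_rep, Projectivization.mk_eq_mk_iff', P.mk_rep, Q.mk_rep]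
  refine ⟨fun h => ?_, ?_⟩
  · obtain ⟨a, ha⟩ := (hasUnitCoord_iff_ne_zero.mpr Q.rep_nonzero).exists_eq_smul h
    exact ⟨a, ha.symm⟩
  · rintro ⟨a, ha⟩
    rw [← ha, ← one_smul K Q.rep, smul_smul, minor_smul_smul, minor_self, mul_zero]

/-- `p` is a vector of primitive homogeneous coordinates of `P` in the valuation ring `A`. -/
structure IsIntegralRep (p : Fin 2 → A) (P : P1 K) : Prop where
  hasUnitCoord : HasUnitCoord p
  exists_rep_eq : ∃ a : K, P.rep = a • (A.subtype ∘ p)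

theorem HasUnitCoord.subtype_comp_ne_zero (hp : HasUnitCoord p) : A.subtype ∘ p ≠ 0 :=
  hasUnitCoord_iff_ne_zero.mp (hp.imp fun _ hi => hi.map A.subtype)

theorem HasUnitCoord.isIntegralRep_iff (hp : HasUnitCoord p) :
    IsIntegralRep p P ↔ P = Projectivization.mk K (A.subtype ∘ p) hp.subtype_comp_ne_zero := by
  rw [← P.mk_rep, Projectivization.mk_eq_mk_iff', P.mk_rep]
  exact ⟨fun h => h.exists_rep_eq.imp fun _ ha => ha.symm,
    fun h => ⟨hp, h.imp fun _ ha => ha.symm⟩⟩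

theorem exists_isIntegralRep (A : ValuationSubring K) (P : P1 K) :
    ∃ p : Fin 2 → A, IsIntegralRep p P := by
  obtain ⟨i, hi⟩ := Finite.exists_max fun i => A.valuation (P.rep i)
  have hne : P.rep i ≠ 0 := by
    refine fun h0 => P.rep_nonzero (funext fun j => ?_)
    exact (map_eq_zero A.valuation).mp (le_zero_iff.mp ((hi j).trans_eq (by rw [h0, map_zero])))
  have hmem (j : Fin 2) : P.rep j / P.rep i ∈ A := by
    rw [← A.valuation_le_one_iff, map_div₀]
    exact div_le_one_of_le₀ (hi j) zero_le
  refine ⟨fun j => ⟨_, hmem j⟩, ⟨i, ?_⟩, P.rep i, funext fun j => ?_⟩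
  · convert isUnit_one using 1
    exact Subtype.ext (div_self hne)
  · exact (mul_div_cancel₀ _ hne).symm

namespace IsIntegralRep

theorem smul {u : A} (hu : IsUnit u) (hp : IsIntegralRep p P) : IsIntegralRep (u • p) P := by
  obtain ⟨a, ha⟩ := hp.exists_rep_eq
  obtain ⟨w, hw⟩ := hu.exists_left_inv
  refine ⟨hp.hasUnitCoord.smul hu, a * A.subtype w, ?_⟩
  rw [ha, ringHom_comp_smul, smul_smul, mul_assoc, ← map_mul, hw, map_one, mul_one]

theorem minor_eq_zero_iff (hp : IsIntegralRep p P) (hq : IsIntegralRep q Q) :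
    minor p q = 0 ↔ P = Q := by
  obtain ⟨a, ha⟩ := hp.exists_rep_eq
  obtain ⟨b, hb⟩ := hq.exists_rep_eq
  have ha0 : a ≠ 0 := left_ne_zero_of_smul (ha ▸ P.rep_nonzero)
  have hb0 : b ≠ 0 := left_ne_zero_of_smul (hb ▸ Q.rep_nonzero)
  rw [← minor_rep_eq_zero_iff, ha, hb, minor_smul_smul, ← map_minor]
  simp only [mul_eq_zero, ha0, hb0, false_or, map_eq_zero_iff _ A.subtype_injective]

theorem exists_isUnit_eq_smul (hp : IsIntegralRep p P) (hq : IsIntegralRep q P) :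
    ∃ u : A, IsUnit u ∧ q = u • p := by
  obtain ⟨u, rfl⟩ := hp.hasUnitCoord.exists_eq_smul ((minor_eq_zero_iff hq hp).mpr rfl)
  exact ⟨u, hq.hasUnitCoord.isUnit_of_smul, rfl⟩

end IsIntegralRep

end IntegralRep

section GoodModel

variable {K : Type*} [Field K] {d : ℕ} {φ : P1Map K d} {A : ValuationSubring K}
  {F₀ G₀ : MvPolynomial (Fin 2) A} {E : MvPolynomial (Fin 2 ⊕ Fin 2) A} {p r : Fin 2 → A}
  {P Q R : P1 K} {N : ℕ}

theorem P1Map.toFun_mk (φ : P1Map K d) {x : Fin 2 → K} (hx : x ≠ 0)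
    (h : planeMap φ.F φ.G x ≠ 0) :
    φ.toFun (Projectivization.mk K x hx) = Projectivization.mk K (planeMap φ.F φ.G x) h := by
  obtain ⟨a, b, rfl⟩ : ∃ a b, x = ![a, b] := ⟨x 0, x 1, funext fun i => by fin_cases i <;> rfl⟩
  exact φ.compat a b hx h

theorem IsCriticalPt.sq_dvd {x : Fin 2 → K} {hx : x ≠ 0}
    (h : IsCriticalPt φ (Projectivization.mk K x hx)) :
    (C (x 1) * X 0 - C (x 0) * X 1) ^ 2 ∣
      C (eval x φ.G) * φ.F - C (eval x φ.F) * φ.G := by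
  obtain ⟨a, b, hab, hmk, hdvd⟩ := h
  obtain ⟨l, rfl⟩ := (Projectivization.mk_eq_mk_iff' K x ![a, b] hx hab).mp hmk
  have hl : l ≠ 0 := left_ne_zero_of_smul hx
  have hline : (C ((l • ![a, b]) 1) * X 0 - C ((l • ![a, b]) 0) * X 1 : MvPolynomial (Fin 2) K) =
      C l * (C b * X 0 - C a * X 1) := by
    simp only [Pi.smul_apply, Matrix.cons_val_zero, Matrix.cons_val_one, smul_eq_mul, map_mul]
    ring
  have hform : C (eval (l • ![a, b]) φ.G) * φ.F - C (eval (l • ![a, b]) φ.F) * φ.G =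
      C (l ^ d) * (C (eval ![a, b] φ.G) * φ.F - C (eval ![a, b] φ.F) * φ.G) := by
    rw [eval_smul_of_isHomogeneous φ.homF, eval_smul_of_isHomogeneous φ.homG, map_mul, map_mul]
    ring
  have hunit : IsUnit (C l ^ 2 : MvPolynomial (Fin 2) K) := (hl.isUnit.map C).pow 2
  rw [hline, hform, mul_pow, hunit.mul_left_dvd]
  exact hdvd.mul_left _

/-- `[F₀ : G₀]` is a model of `φ` over the valuation ring `A` witnessing good reduction: it lifts to
primitive coordinates. -/
structure IsGoodModel (φ : P1Map K d) (F₀ G₀ : MvPolynomial (Fin 2) A) : Prop where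
  exists_map_eq : ∃ c : K, map A.subtype F₀ = C c * φ.F ∧ map A.subtype G₀ = C c * φ.G
  hasUnitCoord_planeMap : ∀ p, HasUnitCoord p → HasUnitCoord (planeMap F₀ G₀ p)

namespace IsGoodModel

theorem isHomogeneous (h : IsGoodModel φ F₀ G₀) : F₀.IsHomogeneous d ∧ G₀.IsHomogeneous d := by
  obtain ⟨c, hF, hG⟩ := h.exists_map_eq
  constructor
  · refine IsHomogeneous.of_map A.subtype_injective ?_
    simpa only [hF, zero_add] using (isHomogeneous_C (Fin 2) c).mul φ.homF
  · refine IsHomogeneous.of_map A.subtype_injective ?_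
    simpa only [hG, zero_add] using (isHomogeneous_C (Fin 2) c).mul φ.homG

theorem isIntegralRep_planeMap (h : IsGoodModel φ F₀ G₀) (hp : IsIntegralRep p P) :
    IsIntegralRep (planeMap F₀ G₀ p) (φ.toFun P) := by
  obtain ⟨c, hF, hG⟩ := h.exists_map_eq
  have hcoord := h.hasUnitCoord_planeMap p hp.hasUnitCoord
  have hscale : A.subtype ∘ planeMap F₀ G₀ p = c • planeMap φ.F φ.G (A.subtype ∘ p) := by
    rw [(semiconj_planeMap_map A.subtype).eq, hF, hG]
    simp only [planeMap, map_mul, eval_C, Matrix.smul_cons, smul_eq_mul, Matrix.smul_empty]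
  have hne : planeMap φ.F φ.G (A.subtype ∘ p) ≠ 0 := by
    refine right_ne_zero_of_smul (a := c) ?_
    rw [← hscale]
    exact hcoord.subtype_comp_ne_zero
  rw [hcoord.isIntegralRep_iff, hp.hasUnitCoord.isIntegralRep_iff.mp hp, φ.toFun_mk _ hne, eq_comm,
    Projectivization.mk_eq_mk_iff']
  exact ⟨c, hscale.symm⟩

theorem isIntegralRep_iterate (h : IsGoodModel φ F₀ G₀) (hp : IsIntegralRep p P) (n : ℕ) :
    IsIntegralRep ((planeMap F₀ G₀)^[n] p) (φ.toFun^[n] P) := by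
  induction n with
  | zero => exact hp
  | succ n ih =>
    rw [Function.iterate_succ_apply', Function.iterate_succ_apply']
    exact h.isIntegralRep_planeMap ih

theorem eval_diag_eq_zero (h : IsGoodModel φ F₀ G₀) (hE : IsMinorQuotient F₀ G₀ E)
    (hr : IsIntegralRep r R) (hR : IsCriticalPt φ R) : eval (Sum.elim r r) E = 0 := by
  obtain ⟨c, hF, hG⟩ := h.exists_map_eq
  have hr0 := hr.hasUnitCoord.subtype_comp_ne_zero
  rw [hr.hasUnitCoord.isIntegralRep_iff.mp hr] at hR
  have hzero := (hE.map A.subtype).eval_diag_eq_zero hr0 <| by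
    convert hR.sq_dvd.mul_left (C (c * c)) using 1
    simp only [hF, hG, map_mul, eval_C]
    ring
  rw [← Sum.comp_elim, eval_map, ← eval₂_comp] at hzero
  exact A.subtype_injective (hzero.trans (map_zero _).symm)

theorem not_isCriticalPt_of_isUnit (h : IsGoodModel φ F₀ G₀) (hE : IsMinorQuotient F₀ G₀ E)
    (hr : IsIntegralRep r R) (hunit : IsUnit (iterateQuotient F₀ G₀ E N r r)) {k : ℕ}
    (hk : k < N) : ¬ IsCriticalPt φ (φ.toFun^[k] R) := by
  intro hcrit
  refine hunit.ne_zero (Finset.prod_eq_zero (Finset.mem_range.mpr hk) ?_)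
  exact h.eval_diag_eq_zero hE (h.isIntegralRep_iterate hr k) hcrit

/-- If `P` and `R` had the same reduction, then so would the periodic points `P ≠ Q = φᴺ(R)`; the
difference quotient of `φᴺ` at `(P, Q)` is a unit, hence so are those at `(R, Q)` and `(R, R)`,
which forces `R = Q` and that no critical point is met. -/
theorem isUnit_minor (h : IsGoodModel φ F₀ G₀) (hP : φ.toFun^[N] P = P) (hR : φ.toFun^[N] R = Q)
    (hQ : φ.toFun^[N] Q = Q) (hPQ : P ≠ Q)
    (hcase : R ≠ Q ∨ ∃ k < N, IsCriticalPt φ (φ.toFun^[k] R))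
    (hp : IsIntegralRep p P) (hr : IsIntegralRep r R) : IsUnit (minor p r) := by
  by_contra hcon
  obtain ⟨E, hE⟩ := exists_isMinorQuotient h.isHomogeneous.1 h.isHomogeneous.2
  obtain ⟨t, ht, hrp⟩ :=
    exists_isUnit_residue_comp_smul_eq hp.hasUnitCoord hr.hasUnitCoord hcon
  have htr := hr.smul ht
  obtain ⟨u, hu, hpN⟩ := hp.exists_isUnit_eq_smul (hP ▸ h.isIntegralRep_iterate hp N)
  have hrN := hR ▸ h.isIntegralRep_iterate htr N
  obtain ⟨q, hq, hqN⟩ : ∃ q, IsIntegralRep q Q ∧ (planeMap F₀ G₀)^[N] (t • r) = u • q := by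
    obtain ⟨w, hw⟩ := hu.exists_right_inv
    exact ⟨_, hrN.smul (IsUnit.of_mul_eq_one_right u hw), by rw [smul_smul, hw, one_smul]⟩
  obtain ⟨y, hy, hqy⟩ := hq.exists_isUnit_eq_smul (hQ ▸ h.isIntegralRep_iterate hq N)
  have hqp : IsLocalRing.residue A ∘ q = IsLocalRing.residue A ∘ p := by
    have hres := comp_planeMap_iterate_congr (F := F₀) (G := G₀) hrp N
    rwa [hqN, hpN, ringHom_comp_smul, ringHom_comp_smul, (hu.map _).smul_left_cancel] at hres
  obtain ⟨hminor, hunit⟩ := minor_eq_zero_and_isUnit_iterateQuotient hE hu hy hpN hqN hqy hrp hqp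
    ((hp.minor_eq_zero_iff hq).not.mpr hPQ)
  obtain hRQ | ⟨k, hk, hcrit⟩ := hcase
  · exact hRQ ((htr.minor_eq_zero_iff hq).mp hminor)
  · exact h.not_isCriticalPt_of_isUnit hE htr hunit hk hcrit

end IsGoodModel

end GoodModel

section GoodReduction

variable {K : Type*} [Field K] {d : ℕ} {φ : P1Map K d} {P R : P1 K}

theorem GoodReductionAt.exists_isGoodModel [NumberField K] {v : HeightOneSpectrum (𝓞 K)}
    (h : GoodReductionAt φ v) : ∃ F₀ G₀ : MvPolynomial (Fin 2) (v.valuation K).valuationSubring,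
      IsGoodModel φ F₀ G₀ := by
  obtain ⟨c, -, F₀, G₀, hF, hG, -, hcoprime⟩ := h
  refine ⟨F₀, G₀, ⟨c, hF, hG⟩, fun p hp => ?_⟩
  let k := IsLocalRing.ResidueField (v.valuation K).valuationSubring
  set g := (algebraMap k (AlgebraicClosure k)).comp (IsLocalRing.residue _)
  rw [← hasUnitCoord_comp_iff g, hasUnitCoord_iff_ne_zero] at hp ⊢
  rw [(semiconj_planeMap_map g).eq]
  have heta : g ∘ p = ![g (p 0), g (p 1)] := funext fun i => by fin_cases i <;> rfl
  refine fun hzero => hp ?_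
  rw [heta] at hzero
  obtain ⟨h0, h1⟩ := hcoprime _ _ (congrFun hzero 0) (congrFun hzero 1)
  exact funext (Fin.forall_fin_two.mpr ⟨h0, h1⟩)

/-- The larger of the absolute values of the two coordinates of `x`: the factor by which
`w (minor x y)` has to be divided to measure the `w`-adic distance of two points. -/
def coordMax {Γ₀ : Type*} [LinearOrderedCommGroupWithZero Γ₀] (w : Valuation K Γ₀)
    (x : Fin 2 → K) : Γ₀ :=
  max (w (x 0)) (w (x 1))

section coordMax

variable {Γ₀ : Type*} [LinearOrderedCommGroupWithZero Γ₀] {w : Valuation K Γ₀}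

theorem coordMax_ne_zero {x : Fin 2 → K} (hx : x ≠ 0) : coordMax w x ≠ 0 := by
  contrapose! hx
  have hle := max_le_iff.mp hx.le
  funext i
  fin_cases i
  · exact w.zero_iff.mp (le_zero_iff.mp hle.1)
  · exact w.zero_iff.mp (le_zero_iff.mp hle.2)

theorem HasUnitCoord.coordMax_eq_one {p : Fin 2 → w.valuationSubring} (hp : HasUnitCoord p) :
    coordMax w (w.valuationSubring.subtype ∘ p) = 1 := by
  obtain ⟨i, hi⟩ := hp
  have hone := (Valuation.valuationSubring.integers w).isUnit_iff_valuation_eq_one.mp hi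
  refine le_antisymm (max_le (p 0).2 (p 1).2) (hone.symm.le.trans ?_)
  fin_cases i
  · exact le_max_left _ _
  · exact le_max_right _ _

theorem IsIntegralRep.exists_valuation_eq_coordMax {p : Fin 2 → w.valuationSubring}
    (hp : IsIntegralRep p P) :
    ∃ a, w a = coordMax w P.rep ∧ P.rep = a • (w.valuationSubring.subtype ∘ p) := by
  obtain ⟨a, ha⟩ := hp.exists_rep_eq
  refine ⟨a, ?_, ha⟩
  have hone := hp.hasUnitCoord.coordMax_eq_one
  rw [ha, coordMax, Pi.smul_apply, Pi.smul_apply, smul_eq_mul, smul_eq_mul, map_mul, map_mul,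
    ← mul_max]
  exact ((congrArg _ hone).trans (mul_one _)).symm

theorem valuation_minor_rep_eq {p r : Fin 2 → w.valuationSubring} (hp : IsIntegralRep p P)
    (hr : IsIntegralRep r R) (h : IsUnit (minor p r)) :
    w (minor P.rep R.rep) = coordMax w P.rep * coordMax w R.rep := by
  obtain ⟨a, ha, haP⟩ := hp.exists_valuation_eq_coordMax
  obtain ⟨b, hb, hbR⟩ := hr.exists_valuation_eq_coordMax
  have hone := (Valuation.valuationSubring.integers w).isUnit_iff_valuation_eq_one.mp h
  rw [← ha, ← hb, haP, hbR, minor_smul_smul, ← map_minor, map_mul, map_mul]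
  exact (congrArg _ hone).trans (mul_one _)

end coordMax

end GoodReduction

/-! ### Companions of the special points -/

section Companion

open Function

variable {K : Type*} [Field K] {d : ℕ} {φ : P1Map K d} {P Q R : P1 K}

/-- `Q` is a periodic point to which `R` is mapped, and either `R ≠ Q` or the orbit of `R` meets
the critical locus. Away from `Q`, periodic points stay away from `R` at all places of good
reduction. -/
def IsCompanion (φ : P1Map K d) (R Q : P1 K) : Prop :=
  ∃ n, 0 < n ∧ φ.toFun^[n] R = Q ∧ IsPeriodicPt φ.toFun n Q ∧
    (R ≠ Q ∨ ∃ k, IsCriticalPt φ (φ.toFun^[k] R))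

theorem IsTailPoint.exists_isCompanion (h : IsTailPoint φ R) : ∃ Q, IsCompanion φ R Q := by
  obtain ⟨⟨m, l, hl, hm⟩, hnot⟩ := h
  have hpos : 0 < l * (m + 1) := Nat.mul_pos hl m.succ_pos
  have hle : m ≤ l * (m + 1) := m.le_succ.trans (Nat.le_mul_of_pos_left _ hl)
  have hper : IsPeriodicPt φ.toFun l (φ.toFun^[l * (m + 1)] R) := by
    rw [← Nat.sub_add_cancel hle, iterate_add_apply]
    exact IsPeriodicPt.apply_iterate hm _
  exact ⟨_, _, hpos, rfl, hper.mul_const _, Or.inl fun h => hnot ⟨_, hpos, h.symm⟩⟩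

theorem InCriticalCycle.exists_isCompanion (h : InCriticalCycle φ R) : ∃ Q, IsCompanion φ R Q := by
  obtain ⟨Q, hcrit, ⟨l, hl, hQ⟩, n, rfl⟩ := h
  have hper : IsPeriodicPt φ.toFun l (φ.toFun^[n] Q) := IsPeriodicPt.apply_iterate hQ n
  refine ⟨_, l, hl, hper, hper, Or.inr ⟨l * n - n, ?_⟩⟩
  rw [← iterate_add_apply, Nat.sub_add_cancel (Nat.le_mul_of_pos_left n hl)]
  rwa [(IsPeriodicPt.mul_const hQ n : φ.toFun^[l * n] Q = Q)]

namespace IsCompanion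

theorem exists_common_period (h : IsCompanion φ R Q) (hP : IsPeriodicPoint φ P) :
    ∃ N, φ.toFun^[N] P = P ∧ φ.toFun^[N] R = Q ∧ φ.toFun^[N] Q = Q ∧
      (R ≠ Q ∨ ∃ k < N, IsCriticalPt φ (φ.toFun^[k] R)) := by
  obtain ⟨n, hn, hR, hQ, hcase⟩ := h
  obtain ⟨l, hl, hP⟩ := hP
  obtain ⟨k, hk⟩ : ∃ k, R ≠ Q ∨ IsCriticalPt φ (φ.toFun^[k] R) :=
    exists_or.mpr (hcase.imp_left fun h => ⟨0, h⟩)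
  obtain ⟨j, hj⟩ : ∃ j, l * (k + 1) = j + 1 := Nat.exists_eq_succ_of_ne_zero (by positivity)
  refine ⟨n * (l * (k + 1)), ?_, ?_, hQ.mul_const _, hk.imp_right fun h => ⟨k, ?_, h⟩⟩
  · exact (IsPeriodicPt.mul_const hP _).const_mul n
  · rw [hj, mul_add_one, iterate_add_apply, hR]
    exact hQ.mul_const j
  · exact k.lt_succ_self.trans_le
      ((Nat.le_mul_of_pos_left _ hl).trans (Nat.le_mul_of_pos_left _ hn))

theorem minor_rep_ne_zero (h : IsCompanion φ R Q) (hP : IsPeriodicPoint φ P) (hPQ : P ≠ Q) :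
    minor P.rep R.rep ≠ 0 := by
  rw [Ne, minor_rep_eq_zero_iff]
  rintro rfl
  obtain ⟨N, hPN, hRN, -⟩ := h.exists_common_period hP
  exact hPQ (hPN.symm.trans hRN)

theorem valuation_minor_rep [NumberField K] (h : IsCompanion φ R Q) {v : HeightOneSpectrum (𝓞 K)}
    (hv : GoodReductionAt φ v) (hP : IsPeriodicPoint φ P) (hPQ : P ≠ Q) :
    v.valuation K (minor P.rep R.rep) =
      coordMax (v.valuation K) P.rep * coordMax (v.valuation K) R.rep := by
  obtain ⟨F₀, G₀, hmodel⟩ := hv.exists_isGoodModel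
  obtain ⟨N, hPN, hRN, hQN, hcase⟩ := h.exists_common_period hP
  obtain ⟨p, hp⟩ := exists_isIntegralRep (v.valuation K).valuationSubring P
  obtain ⟨r, hr⟩ := exists_isIntegralRep (v.valuation K).valuationSubring R
  exact valuation_minor_rep_eq hp hr (hmodel.isUnit_minor hPN hRN hQN hPQ hcase hp hr)

end IsCompanion

end Companion

section CrossRatio

variable {K : Type*} [Field K] {a b c x y : Fin 2 → K}

/-- The cross-ratio of four points of the projective line, as a coordinate of `x` that takes the
values `0`, `∞`, `1` at `a`, `b`, `c`. -/
def crossRatio (a b c x : Fin 2 → K) : K :=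
  minor x a * minor b c / (minor x b * minor a c)

theorem crossRatio_ne_zero (hac : minor a c ≠ 0) (hbc : minor b c ≠ 0) (hxa : minor x a ≠ 0)
    (hxb : minor x b ≠ 0) : crossRatio a b c x ≠ 0 :=
  div_ne_zero (mul_ne_zero hxa hbc) (mul_ne_zero hxb hac)

theorem minor_swap (x y : Fin 2 → K) : minor y x = -minor x y := by
  rw [minor, minor]
  ring

theorem one_sub_crossRatio (hac : minor a c ≠ 0) (hxb : minor x b ≠ 0) :
    1 - crossRatio a b c x = crossRatio c b a x := by
  rw [crossRatio, crossRatio, minor_swap a b, minor_swap a c]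
  field_simp
  simp only [minor]
  ring

theorem minor_eq_zero_of_crossRatio_eq (hab : minor a b ≠ 0) (hac : minor a c ≠ 0)
    (hbc : minor b c ≠ 0) (hxb : minor x b ≠ 0) (hyb : minor y b ≠ 0)
    (h : crossRatio a b c x = crossRatio a b c y) : minor x y = 0 := by
  rw [crossRatio, crossRatio, div_eq_div_iff (mul_ne_zero hxb hac) (mul_ne_zero hyb hac)] at h
  have hcross : minor x a * minor y b = minor y a * minor x b :=
    mul_right_cancel₀ (mul_ne_zero hbc hac) (by linear_combination h)
  have hplucker : minor x y * minor a b = minor x a * minor y b - minor y a * minor x b := by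
    simp only [minor]
    ring
  rw [hcross, sub_self] at hplucker
  exact (mul_eq_zero.mp hplucker).resolve_right hab

theorem valuation_crossRatio_of_minor_eq {Γ₀ : Type*} [LinearOrderedCommGroupWithZero Γ₀]
    {w : Valuation K Γ₀} (hx : x ≠ 0) (hxa : w (minor x a) = coordMax w x * coordMax w a)
    (hxb : w (minor x b) = coordMax w x * coordMax w b) :
    w (crossRatio a b c x) =
      coordMax w a * w (minor b c) / (coordMax w b * w (minor a c)) := by
  rw [crossRatio, map_div₀, map_mul, map_mul, hxa, hxb, mul_assoc, mul_assoc,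
    mul_div_mul_left _ _ (coordMax_ne_zero hx)]

end CrossRatio

section Count

variable {K : Type*} [Field K] [NumberField K] {d : ℕ} {φ : P1Map K d}
  {R₁ R₂ R₃ Q₁ Q₂ Q₃ : P1 K}

theorem IsCompanion.valuation_crossRatio_eq {v : HeightOneSpectrum (𝓞 K)}
    (hv : GoodReductionAt φ v) (h1 : IsCompanion φ R₁ Q₁) (h2 : IsCompanion φ R₂ Q₂)
    {c : Fin 2 → K} {P P' : P1 K} (hP : IsPeriodicPoint φ P) (hP1 : P ≠ Q₁) (hP2 : P ≠ Q₂)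
    (hP' : IsPeriodicPoint φ P') (hP1' : P' ≠ Q₁) (hP2' : P' ≠ Q₂) :
    v.valuation K (crossRatio R₁.rep R₂.rep c P.rep) =
      v.valuation K (crossRatio R₁.rep R₂.rep c P'.rep) := by
  rw [valuation_crossRatio_of_minor_eq P.rep_nonzero (h1.valuation_minor_rep hv hP hP1)
      (h2.valuation_minor_rep hv hP hP2),
    valuation_crossRatio_of_minor_eq P'.rep_nonzero (h1.valuation_minor_rep hv hP' hP1')
      (h2.valuation_minor_rep hv hP' hP2')]

theorem card_le_of_isCompanion {T : Finset (HeightOneSpectrum (𝓞 K))}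
    (hgr : GoodReductionOutside φ T) (h12 : R₁ ≠ R₂) (h13 : R₁ ≠ R₃) (h23 : R₂ ≠ R₃)
    (h1 : IsCompanion φ R₁ Q₁) (h2 : IsCompanion φ R₂ Q₂) (h3 : IsCompanion φ R₃ Q₃)
    {W : Finset (P1 K)} (hW : ∀ P ∈ W, IsPeriodicPoint φ P)
    (hQ : ∀ P ∈ W, P ≠ Q₁ ∧ P ≠ Q₂ ∧ P ≠ Q₃) :
    W.card ≤ 3 * 7 ^ (4 * sCard K T) := by
  have hab : minor R₁.rep R₂.rep ≠ 0 := minor_rep_eq_zero_iff.not.mpr h12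
  have hac : minor R₁.rep R₃.rep ≠ 0 := minor_rep_eq_zero_iff.not.mpr h13
  have hbc : minor R₂.rep R₃.rep ≠ 0 := minor_rep_eq_zero_iff.not.mpr h23
  have hca : minor R₃.rep R₁.rep ≠ 0 := minor_rep_eq_zero_iff.not.mpr h13.symm
  have hba : minor R₂.rep R₁.rep ≠ 0 := minor_rep_eq_zero_iff.not.mpr h12.symm
  have hPa (P) (hP : P ∈ W) := h1.minor_rep_ne_zero (hW P hP) (hQ P hP).1
  have hPb (P) (hP : P ∈ W) := h2.minor_rep_ne_zero (hW P hP) (hQ P hP).2.1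
  have hPc (P) (hP : P ∈ W) := h3.minor_rep_ne_zero (hW P hP) (hQ P hP).2.2
  let z (P : P1 K) : K := crossRatio R₁.rep R₂.rep R₃.rep P.rep
  have hz (P) (hP : P ∈ W) : 1 - z P = crossRatio R₃.rep R₂.rep R₁.rep P.rep :=
    one_sub_crossRatio hac (hPb P hP)
  have hinj : Set.InjOn z W := fun P hP P' hP' h => minor_rep_eq_zero_iff.mp
    (minor_eq_zero_of_crossRatio_eq hab hac hbc (hPb P hP) (hPb P' hP') h)
  rw [← Finset.card_image_of_injOn hinj]
  refine card_le_of_valuation_eq T _ ?_ ?_ ?_ ?_ <;> simp only [Finset.forall_mem_image]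
  · exact fun P hP => crossRatio_ne_zero hac hbc (hPa P hP) (hPb P hP)
  · intro P hP hone
    refine crossRatio_ne_zero hca hba (hPc P hP) (hPb P hP) ?_
    rw [← hz P hP, hone, sub_self]
  · exact fun v hv P hP P' hP' => IsCompanion.valuation_crossRatio_eq (hgr v hv) h1 h2
      (hW P hP) (hQ P hP).1 (hQ P hP).2.1 (hW P' hP') (hQ P' hP').1 (hQ P' hP').2.1
  · intro v hv P hP P' hP'
    rw [hz P hP, hz P' hP']
    exact IsCompanion.valuation_crossRatio_eq (hgr v hv) h3 h2
      (hW P hP) (hQ P hP).2.2 (hQ P hP).2.1 (hW P' hP') (hQ P' hP').2.2 (hQ P' hP').2.1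

end Count

theorem encard_le_of_forall_finset_card_le {α : Type*} {s : Set α} {n : ℕ}
    (h : ∀ W : Finset α, (W : Set α) ⊆ s → W.card ≤ n) : s.encard ≤ n := by
  by_contra! hlt
  obtain ⟨t, hts, ht⟩ := Set.exists_subset_encard_eq (Order.add_one_le_of_lt hlt)
  have hfin : t.Finite := Set.finite_of_encard_eq_coe (k := n + 1) ht
  have hcard := h hfin.toFinset (by rwa [hfin.coe_toFinset])
  rw [hfin.encard_eq_coe_toFinset_card] at ht
  have hsucc : hfin.toFinset.card = n + 1 := by exact_mod_cast ht
  omega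

/-- **Theorem.** If there exist three distinct `K`-rational points, each of which is either a
tail point of `φ` or belongs to a critical cycle of `φ`, then
`|Per(φ,K)| ≤ 3·7^{4|S|} + 3`. -/
theorem per_bound_of_three_special_points
    {K : Type*} [Field K] [NumberField K]
    (T : Finset (HeightOneSpectrum (𝓞 K))) {d : ℕ} (hd : 2 ≤ d)
    (φ : P1Map K d) (hgr : GoodReductionOutside φ T)
    (R₁ R₂ R₃ : P1 K) (h12 : R₁ ≠ R₂) (h13 : R₁ ≠ R₃) (h23 : R₂ ≠ R₃)
    (h1 : IsTailPoint φ R₁ ∨ InCriticalCycle φ R₁)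
    (h2 : IsTailPoint φ R₂ ∨ InCriticalCycle φ R₂)
    (h3 : IsTailPoint φ R₃ ∨ InCriticalCycle φ R₃) :
    {P : P1 K | IsPeriodicPoint φ P}.Finite ∧
      {P : P1 K | IsPeriodicPoint φ P}.ncard ≤ 3 * 7 ^ (4 * sCard K T) + 3 := by
  have hcompanion {R : P1 K} (h : IsTailPoint φ R ∨ InCriticalCycle φ R) :
      ∃ Q, IsCompanion φ R Q :=
    h.elim IsTailPoint.exists_isCompanion InCriticalCycle.exists_isCompanion
  obtain ⟨Q₁, hQ₁⟩ := hcompanion h1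
  obtain ⟨Q₂, hQ₂⟩ := hcompanion h2
  obtain ⟨Q₃, hQ₃⟩ := hcompanion h3
  set V : Finset (P1 K) := {Q₁, Q₂, Q₃} with hV
  rw [← Set.encard_le_coe_iff_finite_ncard_le, Nat.cast_add]
  refine (Set.encard_le_encard_sdiff_add_encard _ (V : Set (P1 K))).trans (add_le_add ?_ ?_)
  · refine encard_le_of_forall_finset_card_le fun W hW => ?_
    refine card_le_of_isCompanion hgr h12 h13 h23 hQ₁ hQ₂ hQ₃ (fun P hP => (hW hP).1)
      fun P hP => ?_
    simpa [hV] using (hW hP).2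
  · rw [Set.encard_coe_eq_coe_finsetCard]
    exact Nat.cast_le.mpr Finset.card_le_three
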